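/- arXiv:1506.06545 — 2 statements merged into one kernel-verified Lean document; each statement's English description precedes it below -/
import Mathlib

section
/- For every τ ∈ ℍ, the theta nullwerte satisfy d/dτ log ϑ₄(τ) = (i/(12π))[3η₁(τ) − π²(2ϑ₂(τ)⁴ + ϑ₄(τ)⁴)] and d/dτ log ϑ₃(τ) = (i/(12π))[3η₁(τ) + π²(ϑ₂(τ)⁴ − ϑ₄(τ)⁴)]. -/
open Complex Filter Topology Asymptotics

noncomputable section

/-- membership in the lattice `Λ_τ = ℤ + τℤ`. -/
def InLattice (τ z : ℂ) : Prop := ∃ m n : ℤ, z = (m : ℂ) + (n : ℂ) * τ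

/-- the half-period generators `ω₀ = 0, ω₁ = 1, ω₂ = τ, ω₃ = 1 + τ`. -/
def halfp (τ : ℂ) : Fin 4 → ℂ := ![0, 1, τ, 1 + τ]

/-- the Weierstrass elliptic function `℘(z|τ)`. -/
def wp (τ z : ℂ) : ℂ :=
  z⁻¹ ^ 2 + ∑' w : {w : ℤ × ℤ // w ≠ 0},
    ((z - ((w.1.1 : ℂ) + (w.1.2 : ℂ) * τ))⁻¹ ^ 2 - ((w.1.1 : ℂ) + (w.1.2 : ℂ) * τ)⁻¹ ^ 2)

/-- `℘′(z|τ)`, the `z`-derivative of `℘`. -/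
def wpd (τ z : ℂ) : ℂ := deriv (wp τ) z

/-- `℘″(z|τ)`. -/
def wpdd (τ z : ℂ) : ℂ := deriv (wpd τ) z

def e1 (τ : ℂ) : ℂ := wp τ (1 / 2)
def e2 (τ : ℂ) : ℂ := wp τ (τ / 2)
def e3 (τ : ℂ) : ℂ := wp τ ((1 + τ) / 2)

def g2 (τ : ℂ) : ℂ := -4 * (e1 τ * e2 τ + e1 τ * e3 τ + e2 τ * e3 τ)

/-- `zeta` is the Weierstrass zeta function: for each `τ ∈ ℍ`, `zeta τ` is odd, satisfies
`∂ζ/∂z = -℘` off the lattice, and `ζ(z|τ) - 1/z → 0` as `z → 0`. -/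
def IsWeierstrassZeta (zeta : ℂ → ℂ → ℂ) : Prop :=
  ∀ τ : ℂ, 0 < τ.im →
    (∀ z : ℂ, zeta τ (-z) = - zeta τ z) ∧
    (∀ z : ℂ, ¬ InLattice τ z → HasDerivAt (zeta τ) (- wp τ z) z) ∧
    Tendsto (fun z => zeta τ z - z⁻¹) (𝓝[≠] (0 : ℂ)) (𝓝 0)

/-- `eta1 τ = ζ(z+1|τ) - ζ(z|τ)` is the first quasi-period. -/
def IsEta1 (zeta : ℂ → ℂ → ℂ) (eta1 : ℂ → ℂ) : Prop :=
  ∀ τ : ℂ, 0 < τ.im → ∀ z : ℂ, ¬ InLattice τ z →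
    eta1 τ = zeta τ (z + 1) - zeta τ z

/-- `eta2 τ = ζ(z+τ|τ) - ζ(z|τ)` is the second quasi-period. -/
def IsEta2 (zeta : ℂ → ℂ → ℂ) (eta2 : ℂ → ℂ) : Prop :=
  ∀ τ : ℂ, 0 < τ.im → ∀ z : ℂ, ¬ InLattice τ z →
    eta2 τ = zeta τ (z + τ) - zeta τ z

/-- `sigma` is the Weierstrass sigma function: entire, odd, with
`∂/∂z log σ = ζ` off the lattice and `σ(z|τ)/z → 1` as `z → 0`. -/
def IsWeierstrassSigma (zeta sigma : ℂ → ℂ → ℂ) : Prop :=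
  ∀ τ : ℂ, 0 < τ.im →
    (∀ z : ℂ, sigma τ (-z) = - sigma τ z) ∧
    Differentiable ℂ (sigma τ) ∧
    (∀ z : ℂ, ¬ InLattice τ z → HasDerivAt (sigma τ) (zeta τ z * sigma τ z) z) ∧
    Tendsto (fun z => sigma τ z / z) (𝓝[≠] (0 : ℂ)) (𝓝 1)

/-- the Hamiltonian system (142) for `(p(τ), A(τ))` on `V`. -/
def HamSystem (n : Fin 4 → ℂ) (zeta : ℂ → ℂ → ℂ) (eta1 : ℂ → ℂ)
    (V : Set ℂ) (p A : ℂ → ℂ) : Prop :=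
  ∀ τ ∈ V,
    HasDerivAt p ((-Complex.I / (4 * (Real.pi : ℂ))) *
      (2 * A τ - zeta τ (2 * p τ) + 2 * p τ * eta1 τ)) τ ∧
    HasDerivAt A ((Complex.I / (4 * (Real.pi : ℂ))) *
      ((2 * wp τ (2 * p τ) + 2 * eta1 τ) * A τ - (3 / 2) * wpd τ (2 * p τ)
        - ∑ k : Fin 4, n k * (n k + 1) * wpd τ (p τ + halfp τ k / 2))) τ

/-- the generalized Lamé potential `I(z;τ)`. -/
def Ipot (n : Fin 4 → ℂ) (zeta : ℂ → ℂ → ℂ) (A B p τ z : ℂ) : ℂ :=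
  (∑ k : Fin 4, n k * (n k + 1) * wp τ (z + halfp τ k / 2))
    + (3 / 4) * (wp τ (z + p) + wp τ (z - p))
    + A * (zeta τ (z + p) - zeta τ (z - p)) + B

end

noncomputable section

/-- the theta nullwert `ϑ₂(τ) = Σ e^{πiτ(n+1/2)²}`. -/
def thetaNull2 (τ : ℂ) : ℂ :=
  ∑' n : ℤ, Complex.exp ((Real.pi : ℂ) * Complex.I * τ * ((n : ℂ) + 1 / 2) ^ 2)

/-- the theta nullwert `ϑ₃(τ) = Σ e^{πiτn²}`. -/
def thetaNull3 (τ : ℂ) : ℂ :=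
  ∑' n : ℤ, Complex.exp ((Real.pi : ℂ) * Complex.I * τ * (n : ℂ) ^ 2)

/-- the theta nullwert `ϑ₄(τ) = Σ (-1)ⁿ e^{πiτn²}`. -/
def thetaNull4 (τ : ℂ) : ℂ :=
  ∑' n : ℤ, (-1 : ℂ) ^ n * Complex.exp ((Real.pi : ℂ) * Complex.I * τ * (n : ℂ) ^ 2)

/-!
The product `(ϑ₂ϑ₃ϑ₄)⁸` is a cusp form of level one and weight twelve, hence a nonzero multiple of
`η²⁴`. So the nullwerte have no zeros, and their logarithmic derivatives sum to `πi E₂ / 4`. The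
maps `τ ↦ τ + 1` and `τ ↦ -1 / τ` permute the nullwerte up to elementary factors. Subtracting from
each logarithmic derivative a third of the sum, and a combination of the fourth powers that
transforms alike, therefore leaves three functions that are permuted with weight two and vanish at
the cusp. Their power sums of degree at most three are level-one cusp forms of weight less than
twelve, so all three functions vanish; Jacobi's identity `ϑ₃⁴ = ϑ₂⁴ + ϑ₄⁴` has a similar proof.

It remains to see that `η₁ = π² E₂ / 3`. Integrating the series of `-℘` from `z` to `z + 1` gives
the sum over the lattice of `1 / (z + 1 - l) - 1 / (z - l) + 1 / l²`. Summed along the rows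
`l ∈ ℤ + nτ`, the first two terms telescope, leaving the Eisenstein summation of `∑ 1 / l²`.
-/

/-- The filter of neighbourhoods of the cusp, on `ℂ` instead of `ℍ` as in
`UpperHalfPlane.atImInfty`. -/
local notation "i∞" => comap im atTop

lemma im_neg_one_div_pos {τ : ℂ} (hτ : 0 < τ.im) : 0 < (-1 / τ).im := by
  simpa [neg_div] using UpperHalfPlane.im_inv_neg_coe_pos ⟨τ, hτ⟩

lemma ne_zero_of_im_pos {τ : ℂ} (hτ : 0 < τ.im) : τ ≠ 0 := by
  rintro rfl
  simp at hτ

lemma isOpen_im_pos : IsOpen {τ : ℂ | 0 < τ.im} := isOpen_lt continuous_const continuous_im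

/-- A cusp form of level one and weight `k`, as a function on `ℂ` of which only the restriction
to the upper half-plane matters. -/
structure IsLevelOneCuspForm (k : ℕ) (f : ℂ → ℂ) : Prop where
  differentiableAt {τ : ℂ} : 0 < τ.im → DifferentiableAt ℂ f τ
  apply_add_one {τ : ℂ} : 0 < τ.im → f (τ + 1) = f τ
  apply_neg_one_div {τ : ℂ} : 0 < τ.im → f (-1 / τ) = τ ^ k * f τ
  tendsto_zero : Tendsto f i∞ (𝓝 0)

namespace IsLevelOneCuspForm

open UpperHalfPlane ModularForm MatrixGroups

variable {k : ℕ} {f : ℂ → ℂ}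

lemma slash_eq (hf : IsLevelOneCuspForm k f) (γ : SL(2, ℤ)) :
    (fun z : ℍ ↦ f z) ∣[(k : ℤ)] γ = fun z : ℍ ↦ f z := by
  refine SlashInvariantForm.slash_action_generators_SL2Z ?_ ?_ γ <;> ext z
  · have hz := pow_ne_zero k z.ne_zero
    rw [SL_slash_apply, modular_S_smul, ModularGroup.denom_S, zpow_neg, zpow_natCast]
    have hS := hf.apply_neg_one_div z.2
    rw [neg_div, one_div, ← inv_neg] at hS
    change f (-(z : ℂ))⁻¹ * _ = _
    rw [hS]
    field_simp
  · have hden : denom (ModularGroup.T : SL(2, ℤ)) z = 1 := by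
      simp [ModularGroup.denom_apply, ModularGroup.coe_T]
    rw [SL_slash_apply, modular_T_smul, hden]
    simpa [add_comm] using hf.apply_add_one z.2

/-- The element of Mathlib's space of cusp forms given by the restriction to `ℍ`. -/
def toCuspForm (hf : IsLevelOneCuspForm k f) : CuspForm 𝒮ℒ k where
  toFun z := f z
  slash_action_eq' := by
    rintro _ ⟨γ, rfl⟩
    exact hf.slash_eq γ
  holo' := by
    rw [UpperHalfPlane.mdifferentiable_iff]
    refine .congr (fun z hz ↦ (hf.differentiableAt hz).differentiableWithinAt) fun z hz ↦ ?_
    simp [ofComplex_apply_of_im_pos hz]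
  zero_at_cusps' hc := by
    rw [Subgroup.IsArithmetic.isCusp_iff_isCusp_SL2Z] at hc
    rw [OnePoint.isZeroAt_iff_forall_SL2Z hc]
    intro γ _
    rw [hf.slash_eq]
    exact hf.tendsto_zero.comp (tendsto_comap_iff.mpr tendsto_comap)

lemma toCuspForm_apply (hf : IsLevelOneCuspForm k f) {τ : ℂ} (hτ : 0 < τ.im) :
    hf.toCuspForm ⟨τ, hτ⟩ = f τ := rfl

lemma eq_zero_of_weight_lt_twelve (hf : IsLevelOneCuspForm k f) (hk : k < 12) {τ : ℂ}
    (hτ : 0 < τ.im) : f τ = 0 := by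
  have : Subsingleton (CuspForm 𝒮ℒ k) :=
    rank_zero_iff.mp (CuspForm.rank_eq_zero_of_weight_lt_twelve (mod_cast hk))
  rw [← hf.toCuspForm_apply hτ, Subsingleton.elim hf.toCuspForm 0, zero_apply]

lemma exists_eq_mul_eta_pow (hf : IsLevelOneCuspForm 12 f) :
    ∃ c : ℂ, ∀ {τ : ℂ}, 0 < τ.im → f τ = c * ModularForm.eta τ ^ 24 := by
  obtain ⟨c, hc⟩ := CuspForm.exists_smul_discriminant_of_weight_eq_twelve hf.toCuspForm
  exact ⟨c, fun hτ ↦ (DFunLike.congr_fun hc ⟨_, hτ⟩).symm⟩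

end IsLevelOneCuspForm

open Polynomial in
lemma eq_zero_of_sum_pow_eq_zero {ι K : Type*} [Fintype ι] [Field K] [CharZero K] {x : ι → K}
    (h : ∀ j ∈ Set.Icc 1 (Fintype.card ι), ∑ i, x i ^ j = 0) (i : ι) : x i = 0 := by
  classical
  by_contra hi
  let s : Finset ι := {j | x j ≠ x i}
  -- `p` vanishes at `0` and at the values of `x` other than `x i`.
  let p : K[X] := X * ∏ j ∈ s, (X - C (x j))
  have hdeg : p.natDegree ≤ Fintype.card ι := by
    have hs : s.card < Fintype.card ι := Finset.card_lt_univ_of_notMem (x := i) (by simp [s])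
    rw [natDegree_X_mul (Finset.prod_ne_zero_iff.mpr fun j _ ↦ X_sub_C_ne_zero _),
      natDegree_finsetProd_X_sub_C_eq_card]
    exact hs
  have hsum : ∑ j, p.eval (x j) = 0 := by
    simp_rw [eval_eq_sum_range]
    rw [Finset.sum_comm]
    refine Finset.sum_eq_zero fun m hm ↦ ?_
    rw [← Finset.mul_sum]
    obtain rfl | hm0 := m.eq_zero_or_pos
    · simp [p]
    · rw [h m ⟨hm0, (Finset.mem_range_succ_iff.mp hm).trans hdeg⟩, mul_zero]
  have heval (j : ι) : p.eval (x j) = if x j = x i then p.eval (x i) else 0 := by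
    split_ifs with hj
    · rw [hj]
    · rw [eval_mul, eval_prod, Finset.prod_eq_zero (i := j) (by simpa [s] using hj) (by simp),
        mul_zero]
  have hpi : p.eval (x i) ≠ 0 := by
    rw [eval_mul, eval_X, eval_prod]
    refine mul_ne_zero hi (Finset.prod_ne_zero_iff.mpr fun j hj ↦ ?_)
    rw [eval_sub, eval_X, eval_C, sub_ne_zero]
    exact (Finset.mem_filter.mp hj).2.symm
  have hcard : (Finset.univ.filter (x · = x i)).card * p.eval (x i) = 0 := by
    rw [← hsum, Finset.sum_congr rfl fun j _ ↦ heval j, ← Finset.sum_filter, Finset.sum_const,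
      nsmul_eq_mul]
  rw [mul_eq_zero, or_iff_left hpi, Nat.cast_eq_zero, Finset.card_eq_zero] at hcard
  exact Finset.eq_empty_iff_forall_notMem.mp hcard i (by simp)

lemma eq_zero_of_perm_invariant_family {ι : Type*} [Fintype ι] {k : ℕ} {f : ι → ℂ → ℂ}
    (hk : Fintype.card ι * k < 12) (σT σS : Equiv.Perm ι)
    (hd : ∀ i {τ}, 0 < τ.im → DifferentiableAt ℂ (f i) τ)
    (hT : ∀ i {τ}, 0 < τ.im → f i (τ + 1) = f (σT i) τ)
    (hS : ∀ i {τ}, 0 < τ.im → f i (-1 / τ) = τ ^ k * f (σS i) τ)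
    (h0 : ∀ i, Tendsto (f i) i∞ (𝓝 0)) (i : ι) {τ : ℂ} (hτ : 0 < τ.im) : f i τ = 0 := by
  refine eq_zero_of_sum_pow_eq_zero (x := (f · τ)) (fun j hj ↦ ?_) i
  have hcusp : IsLevelOneCuspForm (k * j) fun τ ↦ ∑ i, f i τ ^ j :=
    { differentiableAt hτ := .fun_sum fun i _ ↦ (hd i hτ).fun_pow j
      apply_add_one hτ := by
        simp only [hT _ hτ]
        exact Equiv.sum_comp σT (f · _ ^ j)
      apply_neg_one_div hτ := by
        simp only [hS _ hτ, mul_pow, ← pow_mul, ← Finset.mul_sum]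
        congr 1
        exact Equiv.sum_comp σS (f · _ ^ j)
      tendsto_zero := by
        simpa [Nat.one_le_iff_ne_zero.mp hj.1] using
          tendsto_finsetSum Finset.univ fun i _ ↦ (h0 i).pow j }
  exact hcusp.eq_zero_of_weight_lt_twelve (lt_of_le_of_lt (by nlinarith [hj.2]) hk) hτ

instance : (i∞).NeBot :=
  comap_neBot fun s hs ↦ by
    obtain ⟨y, hy⟩ := (atTop : Filter ℝ).nonempty_of_mem hs
    exact ⟨y * I, by simpa⟩

lemma eventually_im_pos : ∀ᶠ τ in i∞, 0 < τ.im :=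
  tendsto_comap.eventually (eventually_gt_atTop 0)

lemma tendsto_add_one_imInfty : Tendsto (· + 1) i∞ i∞ := by
  simpa [tendsto_comap_iff, Function.comp_def] using tendsto_comap

lemma norm_cexp_pi_mul_I_mul_ofReal (τ : ℂ) (a : ℝ) :
    ‖cexp (Real.pi * I * τ * a)‖ = Real.exp (-(Real.pi * a * τ.im)) := by
  rw [norm_exp, show Real.pi * I * τ * a = (Real.pi * a : ℝ) * (I * τ) by push_cast; ring,
    re_ofReal_mul]
  simp

lemma tendsto_cexp_imInfty {a : ℝ} (ha : 0 < a) :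
    Tendsto (fun τ ↦ cexp (Real.pi * I * τ * a)) i∞ (𝓝 0) := by
  rw [tendsto_zero_iff_norm_tendsto_zero]
  simp_rw [norm_cexp_pi_mul_I_mul_ofReal]
  exact Real.tendsto_exp_neg_atTop_nhds_zero.comp
    (tendsto_comap.const_mul_atTop (by positivity))

lemma tendsto_tsum_cexp_imInfty {ι : Type*} {a : ι → ℝ} (ha : ∀ n, 0 ≤ a n)
    (hs : Summable fun n ↦ Real.exp (-(Real.pi * a n))) :
    Tendsto (fun τ ↦ ∑' n, cexp (Real.pi * I * τ * a n)) i∞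
      (𝓝 (∑' n, if a n = 0 then 1 else 0)) := by
  refine tendsto_tsum_of_dominated_convergence hs (fun n ↦ ?_) ?_
  · split_ifs with hn
    · simp [hn]
    · exact tendsto_cexp_imInfty ((ha n).lt_of_ne' hn)
  · filter_upwards [tendsto_comap.eventually (eventually_ge_atTop 1)] with τ hτ n
    rw [norm_cexp_pi_mul_I_mul_ofReal, Real.exp_le_exp, neg_le_neg_iff]
    exact le_mul_of_one_le_right (mul_nonneg Real.pi_pos.le (ha n)) hτ

lemma tendsto_deriv_imInfty {f : ℂ → ℂ} {L : ℂ}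
    (hd : ∀ {τ}, 0 < τ.im → DifferentiableAt ℂ f τ) (hf : Tendsto f i∞ (𝓝 L)) :
    Tendsto (deriv f) i∞ (𝓝 0) := by
  -- Cauchy's estimate for `f - L` on the circle of radius `1`.
  rw [Metric.tendsto_nhds]
  intro ε hε
  obtain ⟨s, hs, hfs⟩ := mem_comap.mp (Metric.tendsto_nhds.mp hf (ε / 2) (half_pos hε))
  obtain ⟨b, hb⟩ := mem_atTop_sets.mp hs
  filter_upwards [tendsto_comap.eventually (eventually_gt_atTop (max b 0 + 1))] with τ hτ
  have him {w : ℂ} (hw : w ∈ Metric.closedBall τ 1) : max b 0 < w.im := by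
    have := (abs_le.mp ((abs_im_le_norm (w - τ)).trans (mem_closedBall_iff_norm.mp hw))).1
    rw [sub_im] at this
    linarith
  have hball : DiffContOnCl ℂ (f · - L) (Metric.ball τ 1) := by
    refine DifferentiableOn.diffContOnCl fun w hw ↦ ?_
    have hw' := him (Metric.closure_ball_subset_closedBall hw)
    exact ((hd ((le_max_right ..).trans_lt hw')).sub_const L).differentiableWithinAt
  have hbound := norm_deriv_le_of_forall_mem_sphere_norm_le one_pos hball (C := ε / 2)
    fun w hw ↦ by
      have hw' := him (Metric.sphere_subset_closedBall hw)
      have hdist : dist (f w) L < ε / 2 := hfs (hb _ ((le_max_left ..).trans hw'.le))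
      rw [← dist_eq_norm]
      exact hdist.le
  rw [deriv_sub_const, div_one] at hbound
  rw [dist_zero_right]
  exact hbound.trans_lt (half_lt_self hε)

lemma tendsto_logDeriv_imInfty {f : ℂ → ℂ} {L : ℂ} (hL : L ≠ 0)
    (hd : ∀ {τ}, 0 < τ.im → DifferentiableAt ℂ f τ) (hf : Tendsto f i∞ (𝓝 L)) :
    Tendsto (logDeriv f) i∞ (𝓝 0) := by
  simpa [logDeriv] using! (tendsto_deriv_imInfty hd hf).div hf hL

lemma thetaNull3_eq_jacobiTheta₂ (τ : ℂ) : thetaNull3 τ = jacobiTheta₂ 0 τ :=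
  tsum_congr fun n ↦ by
    rw [jacobiTheta₂_term]
    ring_nf

lemma cexp_int_mul_pi_mul_I (n : ℤ) : cexp (n * (Real.pi * I)) = (-1) ^ n := by
  rw [exp_int_mul, exp_pi_mul_I]

lemma thetaNull4_eq_jacobiTheta₂ (τ : ℂ) : thetaNull4 τ = jacobiTheta₂ (1 / 2) τ :=
  tsum_congr fun n ↦ by
    rw [jacobiTheta₂_term, ← cexp_int_mul_pi_mul_I, ← Complex.exp_add]
    ring_nf

lemma thetaNull2_eq_jacobiTheta₂ (τ : ℂ) :
    thetaNull2 τ = cexp (Real.pi * I * τ / 4) * jacobiTheta₂ (τ / 2) τ := by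
  rw [jacobiTheta₂, ← tsum_mul_left]
  refine tsum_congr fun n ↦ ?_
  rw [jacobiTheta₂_term, ← Complex.exp_add]
  ring_nf

/-- The theta nullwerte `ϑ₂, ϑ₃, ϑ₄` as one family, indexed by `0, 1, 2`. -/
def thetaNull : Fin 3 → ℂ → ℂ := ![thetaNull2, thetaNull3, thetaNull4]

lemma differentiableAt_jacobiTheta₂_div_two {τ : ℂ} (hτ : 0 < τ.im) :
    DifferentiableAt ℂ (fun τ ↦ jacobiTheta₂ (τ / 2) τ) τ :=
  (hasFDerivAt_jacobiTheta₂ (τ / 2) hτ).differentiableAt.comp τ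
    (f := fun τ ↦ (τ / 2, τ)) (by fun_prop)

lemma differentiableAt_thetaNull (i : Fin 3) {τ : ℂ} (hτ : 0 < τ.im) :
    DifferentiableAt ℂ (thetaNull i) τ := by
  fin_cases i
  · have h := differentiableAt_jacobiTheta₂_div_two hτ
    refine DifferentiableAt.congr_of_eventuallyEq (f := fun τ ↦ _) ?_
      (.of_eq (funext thetaNull2_eq_jacobiTheta₂))
    fun_prop
  · exact (differentiableAt_jacobiTheta₂_snd 0 hτ).congr_of_eventuallyEq
      (.of_eq (funext thetaNull3_eq_jacobiTheta₂))
  · exact (differentiableAt_jacobiTheta₂_snd (1 / 2) hτ).congr_of_eventuallyEq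
      (.of_eq (funext thetaNull4_eq_jacobiTheta₂))

lemma thetaNull3_add_one (τ : ℂ) : thetaNull3 (τ + 1) = thetaNull4 τ := by
  refine tsum_congr fun n ↦ ?_
  have : cexp (Real.pi * I * n ^ 2) = (-1) ^ n := by
    rw [← cexp_int_mul_pi_mul_I, Complex.exp_eq_exp_iff_exists_int]
    obtain ⟨k, hk⟩ := Int.even_mul_pred_self n
    refine ⟨k, ?_⟩
    have hk' : (n : ℂ) * (n - 1) = k + k := by exact_mod_cast hk
    linear_combination Real.pi * I * hk'
  rw [← this, ← Complex.exp_add]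
  ring_nf

lemma thetaNull4_add_one (τ : ℂ) : thetaNull4 (τ + 1) = thetaNull3 τ := by
  rw [← thetaNull3_add_one, thetaNull3_eq_jacobiTheta₂, thetaNull3_eq_jacobiTheta₂, add_assoc,
    one_add_one_eq_two, jacobiTheta₂_add_right]

lemma cexp_pi_mul_I_mul_add_half_sq (n : ℤ) :
    cexp (Real.pi * I * ((n : ℂ) + 1 / 2) ^ 2) = cexp (Real.pi * I / 4) := by
  rw [Complex.exp_eq_exp_iff_exists_int]
  obtain ⟨k, hk⟩ := Int.even_mul_succ_self n
  refine ⟨k, ?_⟩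
  have hk' : (n : ℂ) * (n + 1) = k + k := by exact_mod_cast hk
  linear_combination Real.pi * I * hk'

lemma thetaNull2_add_one (τ : ℂ) :
    thetaNull2 (τ + 1) = cexp (Real.pi * I / 4) * thetaNull2 τ := by
  rw [thetaNull2, thetaNull2, ← tsum_mul_left]
  refine tsum_congr fun n ↦ ?_
  rw [← cexp_pi_mul_I_mul_add_half_sq n, ← Complex.exp_add]
  ring_nf

/-- The multipliers of `ϑ₂, ϑ₃, ϑ₄` under `τ ↦ τ + 1`. -/
def thetaMultiplier : Fin 3 → ℂ := ![cexp (Real.pi * I / 4), 1, 1]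

lemma thetaNull_add_one (i : Fin 3) (τ : ℂ) :
    thetaNull i (τ + 1) = thetaMultiplier i * thetaNull (Equiv.swap 1 2 i) τ := by
  fin_cases i
  · exact thetaNull2_add_one τ
  · exact (thetaNull3_add_one τ).trans (one_mul _).symm
  · exact (thetaNull4_add_one τ).trans (one_mul _).symm

/-- The automorphy factor of the theta nullwerte under `τ ↦ -1 / τ`. -/
def thetaFactor (τ : ℂ) : ℂ := (-I * τ) ^ (1 / 2 : ℂ)

lemma thetaFactor_sq (τ : ℂ) : thetaFactor τ ^ 2 = -I * τ := by
  rw [thetaFactor, ← cpow_nat_mul]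
  norm_num

lemma thetaFactor_pow_four (τ : ℂ) : thetaFactor τ ^ 4 = -τ ^ 2 := by
  rw [show thetaFactor τ ^ 4 = (thetaFactor τ ^ 2) ^ 2 by ring, thetaFactor_sq, mul_pow, neg_sq,
    I_sq, neg_one_mul]

lemma thetaFactor_ne_zero {τ : ℂ} (hτ : τ ≠ 0) : thetaFactor τ ≠ 0 := by
  refine pow_ne_zero_iff two_ne_zero |>.mp ?_
  simp [thetaFactor_sq, hτ]

lemma jacobiTheta₂_neg_one_div (z : ℂ) {τ : ℂ} (hτ : τ ≠ 0) :
    jacobiTheta₂ (z / τ) (-1 / τ) =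
      thetaFactor τ * cexp (Real.pi * I * z ^ 2 / τ) * jacobiTheta₂ z τ := by
  have hexp : cexp (Real.pi * I * z ^ 2 / τ) * cexp (-Real.pi * I * z ^ 2 / τ) = 1 := by
    rw [← Complex.exp_add, show _ + _ = (0 : ℂ) by ring, Complex.exp_zero]
  have hκ : thetaFactor τ * (1 / thetaFactor τ) = 1 :=
    mul_one_div_cancel (thetaFactor_ne_zero hτ)
  rw [jacobiTheta₂_functional_equation z τ]
  change _ = _ * (1 / thetaFactor τ * _ * _)
  linear_combination
    (-jacobiTheta₂ (z / τ) (-1 / τ)) * (hκ + thetaFactor τ * (1 / thetaFactor τ) * hexp)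

lemma thetaNull_neg_one_div (i : Fin 3) {τ : ℂ} (hτ : τ ≠ 0) :
    thetaNull i (-1 / τ) = thetaFactor τ * thetaNull (Equiv.swap 0 2 i) τ := by
  fin_cases i
  · change thetaNull2 (-1 / τ) = thetaFactor τ * thetaNull4 τ
    have h := jacobiTheta₂_neg_one_div (-(1 / 2)) hτ
    rw [jacobiTheta₂_neg_left, show -(1 / 2) / τ = -1 / τ / 2 by ring] at h
    have hexp :
        cexp (Real.pi * I * (-1 / τ) / 4) * cexp (Real.pi * I * (-(1 / 2)) ^ 2 / τ) = 1 := by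
      rw [← Complex.exp_add, show _ + _ = (0 : ℂ) by ring, Complex.exp_zero]
    rw [thetaNull2_eq_jacobiTheta₂, thetaNull4_eq_jacobiTheta₂, h]
    linear_combination thetaFactor τ * jacobiTheta₂ (1 / 2) τ * hexp
  · change thetaNull3 (-1 / τ) = thetaFactor τ * thetaNull3 τ
    have h := jacobiTheta₂_neg_one_div 0 hτ
    simpa [thetaNull3_eq_jacobiTheta₂] using h
  · change thetaNull4 (-1 / τ) = thetaFactor τ * thetaNull2 τ
    have h := jacobiTheta₂_neg_one_div (τ / 2) hτ
    rw [div_div_cancel_left' hτ, ← one_div] at h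
    rw [thetaNull4_eq_jacobiTheta₂, thetaNull2_eq_jacobiTheta₂, h, ← mul_assoc]
    congr 3
    field_simp
    norm_num

lemma summable_exp_sq_add_mul (b : ℝ) :
    Summable fun n : ℤ ↦ Real.exp (-(Real.pi * ((n : ℝ) ^ 2 + b * n))) := by
  refine ((summable_jacobiTheta₂_term_iff (b / 2 * I) I).mpr (by simp)).norm.congr fun n ↦ ?_
  have him : ((b : ℂ) / 2 * I).im = b / 2 := by simp
  rw [norm_jacobiTheta₂_term, I_im, him]
  ring_nf

lemma tendsto_jacobiTheta₂_div_two_imInfty :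
    Tendsto (fun τ ↦ jacobiTheta₂ (τ / 2) τ) i∞ (𝓝 2) := by
  have hlim := tendsto_tsum_cexp_imInfty (a := fun n : ℤ ↦ (n : ℝ) ^ 2 + n)
    (fun n ↦ mod_cast (by cases n <;> grind : 0 ≤ n ^ 2 + n))
    (by simpa using summable_exp_sq_add_mul 1)
  have hsum : ∑' n : ℤ, (if (n : ℝ) ^ 2 + n = 0 then 1 else 0 : ℂ) = 2 := by
    have hn (n : ℤ) : (n : ℝ) ^ 2 + n = 0 ↔ n ∈ ({0, -1} : Finset ℤ) := by
      rw [sq, ← mul_add_one, Finset.mem_insert, Finset.mem_singleton, eq_neg_iff_add_eq_zero,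
        mul_eq_zero]
      norm_cast
    simp_rw [hn]
    rw [tsum_eq_sum (s := {0, -1}) fun n hn ↦ if_neg hn, Finset.sum_ite_mem]
    simp
  rw [hsum] at hlim
  refine hlim.congr fun τ ↦ tsum_congr fun n ↦ ?_
  rw [jacobiTheta₂_term]
  push_cast
  ring_nf

lemma tendsto_thetaNull3_imInfty : Tendsto thetaNull3 i∞ (𝓝 1) := by
  have hlim := tendsto_tsum_cexp_imInfty (a := fun n : ℤ ↦ (n : ℝ) ^ 2)
    (fun n ↦ sq_nonneg _) (by simpa using summable_exp_sq_add_mul 0)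
  simpa [funext thetaNull3.eq_1] using hlim

lemma tendsto_thetaNull_imInfty (i : Fin 3) :
    Tendsto (thetaNull i) i∞ (𝓝 (![0, 1, 1] i)) := by
  fin_cases i
  · have h := (tendsto_cexp_imInfty (a := 1 / 4) (by norm_num)).mul
      tendsto_jacobiTheta₂_div_two_imInfty
    rw [zero_mul] at h
    refine h.congr fun τ ↦ ?_
    change _ = thetaNull2 τ
    rw [thetaNull2_eq_jacobiTheta₂]
    push_cast
    ring_nf
  · exact tendsto_thetaNull3_imInfty
  · exact (tendsto_thetaNull3_imInfty.comp tendsto_add_one_imInfty).congr thetaNull3_add_one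

lemma tendsto_exp_mul_prod_thetaNull_imInfty :
    Tendsto (fun τ ↦ cexp (-(Real.pi * I * τ / 4)) * ∏ j, thetaNull j τ) i∞ (𝓝 2) := by
  have h := (tendsto_jacobiTheta₂_div_two_imInfty.mul (tendsto_thetaNull_imInfty 1)).mul
    (tendsto_thetaNull_imInfty 2)
  have hlim : (2 : ℂ) * ![0, 1, 1] 1 * ![0, 1, 1] 2 = 2 := by simp
  rw [hlim] at h
  refine h.congr fun τ ↦ ?_
  have hexp : cexp (-(Real.pi * I * τ / 4)) * cexp (Real.pi * I * τ / 4) = 1 := by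
    rw [← Complex.exp_add, neg_add_cancel, Complex.exp_zero]
  rw [Fin.prod_univ_three, show thetaNull 0 τ = thetaNull2 τ from rfl,
    thetaNull2_eq_jacobiTheta₂]
  linear_combination (-jacobiTheta₂ (τ / 2) τ * thetaNull 1 τ * thetaNull 2 τ) * hexp

lemma isLevelOneCuspForm_prod_thetaNull_pow_eight :
    IsLevelOneCuspForm 12 fun τ ↦ (∏ j, thetaNull j τ) ^ 8 where
  differentiableAt hτ := (DifferentiableAt.fun_finsetProd
    fun j _ ↦ differentiableAt_thetaNull j hτ).fun_pow 8
  apply_add_one {τ} _ := by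
    have hc : (∏ j, thetaMultiplier j) ^ 8 = 1 := by
      rw [Fin.prod_univ_three, ← Complex.exp_two_pi_mul_I]
      simp only [thetaMultiplier, Matrix.cons_val, mul_one, ← Complex.exp_nat_mul]
      ring_nf
    simp only [thetaNull_add_one, Finset.prod_mul_distrib]
    rw [Equiv.prod_comp (Equiv.swap 1 2) (thetaNull · τ), mul_pow, hc, one_mul]
  apply_neg_one_div {τ} hτ := by
    simp only [thetaNull_neg_one_div _ (ne_zero_of_im_pos hτ), Finset.prod_mul_distrib]
    rw [Equiv.prod_comp (Equiv.swap 0 2) (thetaNull · τ), mul_pow, Finset.prod_const,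
      Finset.card_univ, Fintype.card_fin,
      show (thetaFactor τ ^ 3) ^ 8 = (thetaFactor τ ^ 4) ^ 6 by ring, thetaFactor_pow_four]
    ring
  tendsto_zero := by
    have h := (tendsto_finsetProd Finset.univ fun j _ ↦ tendsto_thetaNull_imInfty j).pow 8
    simpa [Fin.prod_univ_three] using h

lemma exists_prod_thetaNull_pow_eight_eq :
    ∃ c ≠ 0, ∀ {τ : ℂ}, 0 < τ.im → (∏ j, thetaNull j τ) ^ 8 = c * ModularForm.eta τ ^ 24 := by
  obtain ⟨c, hc⟩ := isLevelOneCuspForm_prod_thetaNull_pow_eight.exists_eq_mul_eta_pow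
  refine ⟨c, ?_, hc⟩
  rintro rfl
  have hzero : ∀ᶠ τ in i∞, cexp (-(Real.pi * I * τ / 4)) * ∏ j, thetaNull j τ = 0 := by
    filter_upwards [eventually_im_pos] with τ hτ
    have := hc hτ
    rw [zero_mul] at this
    rw [eq_zero_of_pow_eq_zero this, mul_zero]
  exact two_ne_zero <| tendsto_nhds_unique_of_eventuallyEq
    tendsto_exp_mul_prod_thetaNull_imInfty tendsto_const_nhds hzero

lemma thetaNull_ne_zero (i : Fin 3) {τ : ℂ} (hτ : 0 < τ.im) : thetaNull i τ ≠ 0 := by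
  obtain ⟨c, hc0, hc⟩ := exists_prod_thetaNull_pow_eight_eq
  have hprod : (∏ j, thetaNull j τ) ^ 8 ≠ 0 := by
    rw [hc hτ]
    exact mul_ne_zero hc0 (pow_ne_zero _ (ModularForm.eta_ne_zero hτ))
  exact Finset.prod_ne_zero_iff.mp (pow_ne_zero_iff (by norm_num) |>.mp hprod) i
    (Finset.mem_univ i)

lemma sum_logDeriv_thetaNull {τ : ℂ} (hτ : 0 < τ.im) :
    ∑ j, logDeriv (thetaNull j) τ = Real.pi * I / 4 * EisensteinSeries.E2 ⟨τ, hτ⟩ := by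
  obtain ⟨c, hc0, hc⟩ := exists_prod_thetaNull_pow_eight_eq
  have hev : (fun τ ↦ (∏ j, thetaNull j τ) ^ 8) =ᶠ[𝓝 τ] fun τ ↦ c * ModularForm.eta τ ^ 24 :=
    (isOpen_im_pos.eventually_mem hτ).mono fun z hz ↦ hc hz
  have hd (j : Fin 3) := differentiableAt_thetaNull j hτ
  have h := (logDeriv_congr_nhds hev).eq_of_nhds
  rw [logDeriv_const_mul _ _ hc0,
    logDeriv_fun_pow (ModularForm.differentiableAt_eta_of_mem_upperHalfPlaneSet hτ),
    logDeriv_fun_pow (.fun_finsetProd fun j _ ↦ hd j),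
    logDeriv_prod (fun j _ ↦ thetaNull_ne_zero j hτ) (fun j _ ↦ hd j)] at h
  have hη : logDeriv ModularForm.eta τ = Real.pi * I / 12 * EisensteinSeries.E2 ⟨τ, hτ⟩ :=
    ModularForm.logDeriv_eta_eq_E2 ⟨τ, hτ⟩
  rw [hη] at h
  push_cast at h
  linear_combination h / 8

lemma thetaNull_add_one_pow_four (i : Fin 3) (τ : ℂ) :
    thetaNull i (τ + 1) ^ 4 = ![-1, 1, 1] i * thetaNull (Equiv.swap 1 2 i) τ ^ 4 := by
  have hc : thetaMultiplier i ^ 4 = ![-1, 1, 1] i := by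
    fin_cases i
    · simp [thetaMultiplier, ← Complex.exp_nat_mul, mul_div_cancel₀]
    · simp [thetaMultiplier]
    · simp [thetaMultiplier]
  rw [thetaNull_add_one, mul_pow, hc]

lemma thetaNull_neg_one_div_pow_four (i : Fin 3) {τ : ℂ} (hτ : τ ≠ 0) :
    thetaNull i (-1 / τ) ^ 4 = -τ ^ 2 * thetaNull (Equiv.swap 0 2 i) τ ^ 4 := by
  rw [thetaNull_neg_one_div i hτ, mul_pow, thetaFactor_pow_four]

lemma thetaNull3_pow_four_eq_add {τ : ℂ} (hτ : 0 < τ.im) :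
    thetaNull3 τ ^ 4 = thetaNull2 τ ^ 4 + thetaNull4 τ ^ 4 := by
  -- The difference of the two sides changes sign under `τ ↦ τ + 1`, so only its square is modular.
  have hcusp : IsLevelOneCuspForm 4
      fun τ ↦ (thetaNull 1 τ ^ 4 - thetaNull 0 τ ^ 4 - thetaNull 2 τ ^ 4) ^ 2 :=
    { differentiableAt hτ := by
        have hd (j : Fin 3) := differentiableAt_thetaNull j hτ
        fun_prop
      apply_add_one _ := by
        simp only [thetaNull_add_one_pow_four, Equiv.swap_apply_left, Equiv.swap_apply_right,
          show Equiv.swap (1 : Fin 3) 2 0 = 0 from rfl, Matrix.cons_val]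
        ring
      apply_neg_one_div hτ := by
        simp only [thetaNull_neg_one_div_pow_four _ (ne_zero_of_im_pos hτ),
          Equiv.swap_apply_left, Equiv.swap_apply_right,
          show Equiv.swap (0 : Fin 3) 2 1 = 1 from rfl]
        ring
      tendsto_zero := by
        have h (j : Fin 3) := (tendsto_thetaNull_imInfty j).pow 4
        simpa using (((h 1).sub (h 0)).sub (h 2)).pow 2 }
  have h := eq_zero_of_pow_eq_zero (hcusp.eq_zero_of_weight_lt_twelve (by norm_num) hτ)
  change thetaNull 1 τ ^ 4 = thetaNull 0 τ ^ 4 + thetaNull 2 τ ^ 4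
  linear_combination h

lemma logDeriv_thetaNull_add_one (i : Fin 3) (τ : ℂ) :
    logDeriv (thetaNull i) (τ + 1) = logDeriv (thetaNull (Equiv.swap 1 2 i)) τ := by
  have hc : thetaMultiplier i ≠ 0 := by fin_cases i <;> simp [thetaMultiplier]
  have hcomp : (fun τ ↦ thetaNull i (τ + 1)) =
      fun τ ↦ thetaMultiplier i * thetaNull (Equiv.swap 1 2 i) τ :=
    funext (thetaNull_add_one i)
  rw [← logDeriv_const_mul τ _ hc, ← hcomp, logDeriv_apply, logDeriv_apply, deriv_comp_add_const]

lemma differentiableAt_thetaFactor {τ : ℂ} (hτ : 0 < τ.im) : DifferentiableAt ℂ thetaFactor τ := by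
  refine DifferentiableAt.cpow (by fun_prop) (by fun_prop) (.inl ?_)
  simpa using hτ

lemma logDeriv_thetaNull_neg_one_div (i : Fin 3) {τ : ℂ} (hτ : 0 < τ.im) :
    logDeriv (thetaNull i) (-1 / τ) =
      τ ^ 2 * (logDeriv thetaFactor τ + logDeriv (thetaNull (Equiv.swap 0 2 i)) τ) := by
  have hτ0 := ne_zero_of_im_pos hτ
  have hder : HasDerivAt (fun z : ℂ ↦ -1 / z) (τ ^ 2)⁻¹ τ := by
    simpa [div_eq_mul_inv] using (hasDerivAt_inv hτ0).const_mul (-1)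
  have hev : thetaNull i ∘ (fun z : ℂ ↦ -1 / z) =ᶠ[𝓝 τ]
      fun z ↦ thetaFactor z * thetaNull (Equiv.swap 0 2 i) z :=
    (eventually_ne_nhds hτ0).mono fun z hz ↦ thetaNull_neg_one_div i hz
  have h := (logDeriv_congr_nhds hev).eq_of_nhds
  rw [logDeriv_comp (differentiableAt_thetaNull i (im_neg_one_div_pos hτ))
      hder.differentiableAt, hder.deriv,
    logDeriv_mul _ (thetaFactor_ne_zero hτ0) (thetaNull_ne_zero _ hτ)
      (differentiableAt_thetaFactor hτ) (differentiableAt_thetaNull _ hτ)] at h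
  rw [← h]
  field_simp

lemma logDeriv_thetaNull_zero {τ : ℂ} (hτ : 0 < τ.im) :
    logDeriv (thetaNull 0) τ = Real.pi * I / 4 + logDeriv (fun τ ↦ jacobiTheta₂ (τ / 2) τ) τ := by
  have hmul : thetaNull 0 = fun τ ↦ cexp (Real.pi * I * τ / 4) * jacobiTheta₂ (τ / 2) τ :=
    funext thetaNull2_eq_jacobiTheta₂
  have hne := thetaNull_ne_zero 0 hτ
  rw [hmul, mul_ne_zero_iff] at hne
  have hexp : HasDerivAt (fun z ↦ cexp (Real.pi * I * z / 4))
      (cexp (Real.pi * I * τ / 4) * (Real.pi * I / 4)) τ := by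
    simpa using (((hasDerivAt_id τ).const_mul (Real.pi * I)).div_const 4).cexp
  rw [hmul, logDeriv_mul (g := fun z ↦ jacobiTheta₂ (z / 2) z) τ hne.1 hne.2
    hexp.differentiableAt (differentiableAt_jacobiTheta₂_div_two hτ), logDeriv_apply, hexp.deriv,
    mul_div_cancel_left₀ _ hne.1]

lemma tendsto_logDeriv_thetaNull_imInfty (i : Fin 3) :
    Tendsto (logDeriv (thetaNull i)) i∞ (𝓝 (![Real.pi * I / 4, 0, 0] i)) := by
  fin_cases i
  · have h := (tendsto_logDeriv_imInfty two_ne_zero differentiableAt_jacobiTheta₂_div_two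
      tendsto_jacobiTheta₂_div_two_imInfty).const_add (Real.pi * I / 4)
    rw [add_zero] at h
    exact h.congr' (eventually_im_pos.mono fun τ hτ ↦ (logDeriv_thetaNull_zero hτ).symm)
  · exact tendsto_logDeriv_imInfty one_ne_zero (differentiableAt_thetaNull 1)
      (tendsto_thetaNull_imInfty 1)
  · exact tendsto_logDeriv_imInfty one_ne_zero (differentiableAt_thetaNull 2)
      (tendsto_thetaNull_imInfty 2)

/-- The weight two forms `ϑ₃⁴ + ϑ₄⁴`, `ϑ₂⁴ - ϑ₄⁴`, `-ϑ₂⁴ - ϑ₃⁴`; up to the factor `π² / 3` they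
are the values of `℘` at the half-periods `1 / 2`, `(1 + τ) / 2`, `τ / 2`. -/
def thetaWeightTwo : Fin 3 → ℂ → ℂ :=
  ![fun τ ↦ thetaNull 1 τ ^ 4 + thetaNull 2 τ ^ 4, fun τ ↦ thetaNull 0 τ ^ 4 - thetaNull 2 τ ^ 4,
    fun τ ↦ -thetaNull 0 τ ^ 4 - thetaNull 1 τ ^ 4]

lemma differentiableAt_thetaWeightTwo (i : Fin 3) {τ : ℂ} (hτ : 0 < τ.im) :
    DifferentiableAt ℂ (thetaWeightTwo i) τ := by
  have hd (j : Fin 3) := (differentiableAt_thetaNull j hτ).fun_pow 4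
  fin_cases i
  exacts [(hd 1).add (hd 2), (hd 0).sub (hd 2), (hd 0).neg.sub (hd 1)]

lemma thetaWeightTwo_add_one (i : Fin 3) (τ : ℂ) :
    thetaWeightTwo i (τ + 1) = thetaWeightTwo (Equiv.swap 1 2 i) τ := by
  fin_cases i <;>
    simp [thetaWeightTwo, thetaNull_add_one_pow_four, Equiv.swap_apply_of_ne_of_ne, add_comm]

lemma thetaWeightTwo_neg_one_div (i : Fin 3) {τ : ℂ} (hτ : τ ≠ 0) :
    thetaWeightTwo i (-1 / τ) = τ ^ 2 * thetaWeightTwo (Equiv.swap 0 2 i) τ := by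
  have h₀ : thetaNull 0 (-1 / τ) ^ 4 = -τ ^ 2 * thetaNull 2 τ ^ 4 :=
    thetaNull_neg_one_div_pow_four 0 hτ
  have h₁ : thetaNull 1 (-1 / τ) ^ 4 = -τ ^ 2 * thetaNull 1 τ ^ 4 :=
    thetaNull_neg_one_div_pow_four 1 hτ
  have h₂ : thetaNull 2 (-1 / τ) ^ 4 = -τ ^ 2 * thetaNull 0 τ ^ 4 :=
    thetaNull_neg_one_div_pow_four 2 hτ
  fin_cases i
  · change thetaNull 1 _ ^ 4 + thetaNull 2 _ ^ 4 = _ * (-thetaNull 0 τ ^ 4 - thetaNull 1 τ ^ 4)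
    linear_combination h₁ + h₂
  · change thetaNull 0 _ ^ 4 - thetaNull 2 _ ^ 4 = _ * (thetaNull 0 τ ^ 4 - thetaNull 2 τ ^ 4)
    linear_combination h₀ - h₂
  · change -thetaNull 0 _ ^ 4 - thetaNull 1 _ ^ 4 = _ * (thetaNull 1 τ ^ 4 + thetaNull 2 τ ^ 4)
    linear_combination -h₀ - h₁

lemma tendsto_thetaWeightTwo_imInfty (i : Fin 3) :
    Tendsto (thetaWeightTwo i) i∞ (𝓝 (![2, -1, -1] i)) := by
  have h (j : Fin 3) := (tendsto_thetaNull_imInfty j).pow 4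
  fin_cases i
  · simpa [thetaWeightTwo, one_add_one_eq_two] using (h 1).add (h 2)
  · simpa [thetaWeightTwo] using (h 0).sub (h 2)
  · simpa [thetaWeightTwo] using (h 0).neg.sub (h 1)

lemma logDeriv_thetaNull_eq_sum_add (i : Fin 3) {τ : ℂ} (hτ : 0 < τ.im) :
    logDeriv (thetaNull i) τ =
      (∑ j, logDeriv (thetaNull j) τ) / 3 + Real.pi * I / 12 * thetaWeightTwo i τ := by
  suffices h : logDeriv (thetaNull i) τ - (∑ j, logDeriv (thetaNull j) τ) / 3
      - Real.pi * I / 12 * thetaWeightTwo i τ = 0 by linear_combination h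
  have hL (j : Fin 3) {τ : ℂ} (hτ : 0 < τ.im) : DifferentiableAt ℂ (logDeriv (thetaNull j)) τ := by
    have hd : DifferentiableOn ℂ (thetaNull j) {τ | 0 < τ.im} := fun z hz ↦
      (differentiableAt_thetaNull j hz).differentiableWithinAt
    exact ((hd.deriv isOpen_im_pos).differentiableAt (isOpen_im_pos.mem_nhds hτ)).div
      (differentiableAt_thetaNull j hτ) (thetaNull_ne_zero j hτ)
  refine eq_zero_of_perm_invariant_family (k := 2) (f := fun i τ ↦ logDeriv (thetaNull i) τ -
    (∑ j, logDeriv (thetaNull j) τ) / 3 - Real.pi * I / 12 * thetaWeightTwo i τ)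
    (by decide) (Equiv.swap 1 2) (Equiv.swap 0 2) (fun i τ hτ ↦ ?_) (fun i τ _ ↦ ?_)
    (fun i τ hτ ↦ ?_) (fun i ↦ ?_) i hτ
  · exact ((hL i hτ).sub ((DifferentiableAt.fun_sum fun j _ ↦ hL j hτ).div_const 3)).sub
      ((differentiableAt_thetaWeightTwo i hτ).const_mul _)
  · simp only [logDeriv_thetaNull_add_one, thetaWeightTwo_add_one]
    rw [Equiv.sum_comp (Equiv.swap 1 2) (fun j ↦ logDeriv (thetaNull j) τ)]
  · simp only [logDeriv_thetaNull_neg_one_div _ hτ,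
      thetaWeightTwo_neg_one_div _ (ne_zero_of_im_pos hτ), ← Finset.mul_sum,
      Finset.sum_add_distrib]
    rw [Equiv.sum_comp (Equiv.swap 0 2) (fun j ↦ logDeriv (thetaNull j) τ), Finset.sum_const,
      Finset.card_univ, Fintype.card_fin]
    ring
  · have h := ((tendsto_logDeriv_thetaNull_imInfty i).sub
      ((tendsto_finsetSum Finset.univ fun j _ ↦
        tendsto_logDeriv_thetaNull_imInfty j).div_const 3)).sub
      ((tendsto_thetaWeightTwo_imInfty i).const_mul (Real.pi * I / 12))
    convert h using 2
    rw [Fin.sum_univ_three]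
    fin_cases i <;> simp only [Fin.zero_eta, Fin.mk_one, Fin.reduceFinMk, Matrix.cons_val] <;> ring

lemma logDeriv_thetaNull (i : Fin 3) {τ : ℂ} (hτ : 0 < τ.im) :
    logDeriv (thetaNull i) τ =
      Real.pi * I / 12 * (EisensteinSeries.E2 ⟨τ, hτ⟩ + thetaWeightTwo i τ) := by
  rw [logDeriv_thetaNull_eq_sum_add i hτ, sum_logDeriv_thetaNull hτ]
  ring

section quasiPeriod

lemma hasSum_sub_of_hasSumUniformlyOn_deriv {ι 𝕜 E : Type*} [RCLike 𝕜] [NormedAddCommGroup E]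
    [NormedSpace 𝕜 E] {s : Set 𝕜} (hs : Convex ℝ s) {f f' : ι → 𝕜 → E} {F F' : 𝕜 → E}
    (hf : ∀ i, ∀ x ∈ s, HasDerivWithinAt (f i) (f' i x) s x)
    (hF : ∀ x ∈ s, HasDerivWithinAt F (F' x) s x) (hsum : HasSumUniformlyOn f' F' s)
    {a b : 𝕜} (ha : a ∈ s) (hb : b ∈ s) : HasSum (fun i ↦ f i b - f i a) (F b - F a) := by
  refine Metric.tendsto_nhds.mpr fun ε hε ↦ ?_
  obtain ⟨δ, hδ, hδε⟩ := exists_pos_mul_lt hε ‖b - a‖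
  filter_upwards [Metric.tendstoUniformlyOn_iff.mp hsum.tendstoUniformlyOn δ hδ] with t ht
  have hmean : ‖(F b - ∑ i ∈ t, f i b) - (F a - ∑ i ∈ t, f i a)‖ ≤ δ * ‖b - a‖ :=
    hs.norm_image_sub_le_of_norm_hasDerivWithin_le (f := fun x ↦ F x - ∑ i ∈ t, f i x)
      (fun x hx ↦ (hF x hx).sub (.fun_sum fun i _ ↦ hf i x hx))
      (fun x hx ↦ by simpa [dist_eq_norm] using (ht x hx).le) ha hb
  rw [dist_comm, dist_eq_norm, Finset.sum_sub_distrib, sub_sub_sub_comm]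
  linarith

lemma hasSum_sub_of_hasDerivAt_neg_weierstrassP (L : PeriodPair) {F : ℂ → ℂ} {a b : ℂ}
    (hab : ∀ z ∈ segment ℝ a b, z ∉ L.lattice)
    (hF : ∀ z ∈ segment ℝ a b, HasDerivAt F (-L.weierstrassP z) z) :
    HasSum (fun l : L.lattice ↦ (1 / (b - l) - 1 / (a - l)) + (b - a) / (l : ℂ) ^ 2)
      (F b - F a) := by
  have hcompact : IsCompact (segment ℝ a b) := by
    rw [← convexHull_pair]
    exact (Set.toFinite _).isCompact_convexHull ℝ
  have hderiv (l : L.lattice) : ∀ z ∈ segment ℝ a b,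
      HasDerivAt (fun z : ℂ ↦ -((z - l)⁻¹ + z / (l : ℂ) ^ 2))
        (1 / (z - l) ^ 2 - 1 / (l : ℂ) ^ 2) z := by
    intro z hz
    have hzl : z - l ≠ 0 := sub_ne_zero.mpr fun h ↦ hab z hz (h ▸ l.2)
    refine ((((hasDerivAt_id' z).sub_const (l : ℂ)).fun_inv hzl).fun_add
      ((hasDerivAt_id' z).div_const ((l : ℂ) ^ 2))).fun_neg.congr_deriv ?_
    ring
  have hunif : HasSumUniformlyOn (fun (l : L.lattice) (z : ℂ) ↦ 1 / (z - l) ^ 2 - 1 / (l : ℂ) ^ 2)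
      L.weierstrassP (segment ℝ a b) := by
    rw [hasSumUniformlyOn_iff_tendstoUniformlyOn,
      ← tendstoLocallyUniformlyOn_iff_tendstoUniformlyOn_of_compact hcompact]
    exact L.hasSumLocallyUniformly_weierstrassP.hasSumLocallyUniformlyOn
  have hsum := hasSum_sub_of_hasSumUniformlyOn_deriv (F := fun z ↦ -F z) (convex_segment a b)
    (fun l z hz ↦ (hderiv l z hz).hasDerivWithinAt)
    (fun z hz ↦ by simpa using (hF z hz).fun_neg.hasDerivWithinAt) hunif
    (right_mem_segment ℝ a b) (left_mem_segment ℝ a b)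
  convert! hsum using 1
  · ext l
    ring
  · ring

variable {τ : ℂ}

/-- The generators `1, τ` of `Λ_τ`, as Mathlib's datum for elliptic functions. -/
def periodPair (hτ : 0 < τ.im) : PeriodPair where
  ω₁ := 1
  ω₂ := τ
  indep := LinearIndependent.pair_iff.mpr fun s t h ↦ by
    have ht : t = 0 := by simpa [hτ.ne'] using congrArg im h
    exact ⟨by simpa [ht] using congrArg re h, ht⟩

lemma mem_lattice_periodPair_iff (hτ : 0 < τ.im) {z : ℂ} :
    z ∈ (periodPair hτ).lattice ↔ InLattice τ z := by
  simp [PeriodPair.mem_lattice, InLattice, periodPair, eq_comm]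

lemma hasSum_lattice_periodPair_iff (hτ : 0 < τ.im) {f : ℂ → ℂ} {a : ℂ} :
    HasSum (fun l : (periodPair hτ).lattice ↦ f l) a ↔
      HasSum (fun p : ℤ × ℤ ↦ f (p.1 + p.2 * τ)) a := by
  rw [← (periodPair hτ).latticeEquivProd.symm.toEquiv.hasSum_iff]
  simp only [LinearEquiv.toEquiv_symm, LinearEquiv.coe_symm_toEquiv, Function.comp_def,
    PeriodPair.latticeEquiv_symm_apply]
  simp [periodPair]

lemma wp_eq_weierstrassP (hτ : 0 < τ.im) (z : ℂ) : wp τ z = (periodPair hτ).weierstrassP z := by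
  have hsum := (hasSum_lattice_periodPair_iff (f := fun l ↦ 1 / (z - l) ^ 2 - 1 / l ^ 2) hτ).mp
    ((periodPair hτ).hasSum_weierstrassP z)
  rw [← hsum.tsum_eq, ← hsum.summable.tsum_subtype_add_tsum_subtype_compl {0}, wp]
  congr 1
  · simp
  · simp only [one_div, inv_pow]
    rfl

lemma not_inLattice_of_im_mem_Ioo {z : ℂ} (hz : z.im ∈ Set.Ioo (-τ.im) 0) : ¬ InLattice τ z := by
  rintro ⟨m, n, rfl⟩
  have hτ : 0 < τ.im := by linarith [hz.1, hz.2]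
  have him : n * τ.im ∈ Set.Ioo (-τ.im) 0 := by simpa using hz
  have hlt : (-1 : ℝ) < n := by nlinarith [him.1]
  have hgt : (n : ℝ) < 0 := by nlinarith [him.2]
  norm_cast at hlt hgt
  omega

lemma im_eq_of_mem_segment {a b z : ℂ} (hab : a.im = b.im) (hz : z ∈ segment ℝ a b) :
    z.im = a.im := by
  obtain ⟨t, -, rfl⟩ := (segment_eq_image_lineMap ℝ a b ▸ hz :)
  simp [AffineMap.lineMap_apply, hab]

variable {zeta : ℂ → ℂ → ℂ} {eta1 : ℂ → ℂ}

lemma hasSum_eta1 (hzeta : IsWeierstrassZeta zeta) (heta1 : IsEta1 zeta eta1) (hτ : 0 < τ.im) :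
    HasSum (fun p : ℤ × ℤ ↦ 1 / (p.1 * τ + p.2) ^ 2 -
        (1 / ((2 * p.1 + 1 : ℤ) * (τ / 2) + p.2) - 1 / ((2 * p.1 + 1 : ℤ) * (τ / 2) + p.2 + 1)))
      (eta1 τ) := by
  -- The real translates of `τ / 2` avoid the lattice.
  set a := -(τ / 2) - 1 with ha
  have hlattice (z) (hz : z ∈ segment ℝ a (a + 1)) : ¬ InLattice τ z := by
    refine not_inLattice_of_im_mem_Ioo ?_
    rw [im_eq_of_mem_segment (by simp) hz]
    constructor <;> simp [ha] <;> linarith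
  have hsum := hasSum_sub_of_hasDerivAt_neg_weierstrassP (periodPair hτ)
    (fun z hz ↦ mt (mem_lattice_periodPair_iff hτ).mp (hlattice z hz))
    (fun z hz ↦ wp_eq_weierstrassP hτ z ▸ (hzeta τ hτ).2.1 z (hlattice z hz))
  rw [← heta1 τ hτ a (hlattice a (left_mem_segment ℝ a (a + 1)))] at hsum
  convert (Equiv.prodComm ℤ ℤ).hasSum_iff.mpr ((hasSum_lattice_periodPair_iff
    (f := fun l ↦ 1 / (a + 1 - l) - 1 / (a - l) + (a + 1 - a) / l ^ 2) hτ).mp hsum) using 2 with p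
  have h₁ : a + 1 - (p.2 + p.1 * τ) = -((2 * p.1 + 1 : ℤ) * (τ / 2) + p.2) := by
    push_cast; ring
  have h₂ : a - (p.2 + p.1 * τ) = -((2 * p.1 + 1 : ℤ) * (τ / 2) + p.2 + 1) := by
    push_cast; ring
  simp only [Function.comp_apply, Equiv.prodComm_apply, Prod.fst_swap, Prod.snd_swap, h₁, h₂,
    div_neg]
  ring

lemma hasSum_one_div_linear_sub_one_div_linear_succ (z : UpperHalfPlane) (m : ℤ) :
    HasSum (fun n : ℤ ↦ 1 / ((m : ℂ) * z + n) - 1 / (m * z + n + 1)) 0 := by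
  have hsum := EisensteinSeries.summable_right_one_div_linear_sub_one_div_linear_succ z m
  rw [← EisensteinSeries.tsum_symmetricIco_linear_sub_linear_add_one_eq_zero z m,
    tsum_eq_of_summable_unconditional hsum]
  exact hsum.hasSum

lemma hasSum_e2Summand (z : UpperHalfPlane) (m : ℤ) :
    HasSum (fun n : ℤ ↦ 1 / ((m : ℂ) * z + n) ^ 2) (EisensteinSeries.e2Summand m z) := by
  simpa [EisensteinSeries.e2Summand, EisensteinSeries.eisSummand, zpow_ofNat]
    using (EisensteinSeries.e2Summand_summable m z).hasSum

lemma eta1_eq_G2 (hzeta : IsWeierstrassZeta zeta) (heta1 : IsEta1 zeta eta1) (hτ : 0 < τ.im) :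
    eta1 τ = EisensteinSeries.G2 ⟨τ, hτ⟩ := by
  have hrow (m : ℤ) := (hasSum_e2Summand ⟨τ, hτ⟩ m).sub
    (hasSum_one_div_linear_sub_one_div_linear_succ ⟨τ / 2, by simpa using hτ⟩ (2 * m + 1))
  have hsum := (hasSum_eta1 hzeta heta1 hτ).prod_fiberwise hrow
  simp only [sub_zero] at hsum
  rw [EisensteinSeries.G2, tsum_eq_of_summable_unconditional hsum.summable, hsum.tsum_eq]

lemma E2_eq_eta1 (hzeta : IsWeierstrassZeta zeta) (heta1 : IsEta1 zeta eta1) (hτ : 0 < τ.im) :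
    EisensteinSeries.E2 ⟨τ, hτ⟩ = 3 * eta1 τ / Real.pi ^ 2 := by
  rw [EisensteinSeries.E2, Pi.smul_apply, ← eta1_eq_G2 hzeta heta1 hτ, riemannZeta_two,
    smul_eq_mul]
  field_simp
  ring

lemma hasDerivAt_thetaNull (hzeta : IsWeierstrassZeta zeta) (heta1 : IsEta1 zeta eta1)
    (i : Fin 3) (hτ : 0 < τ.im) :
    HasDerivAt (thetaNull i)
      (I / (12 * Real.pi) * (3 * eta1 τ + Real.pi ^ 2 * thetaWeightTwo i τ) * thetaNull i τ) τ := by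
  refine (differentiableAt_thetaNull i hτ).hasDerivAt.congr_deriv ?_
  have hlog := logDeriv_thetaNull i hτ
  rw [logDeriv_apply, div_eq_iff (thetaNull_ne_zero i hτ), E2_eq_eta1 hzeta heta1 hτ] at hlog
  rw [hlog]
  field_simp

end quasiPeriod

/-- the logarithmic `τ`-derivatives of the theta nullwerte `ϑ₄` and `ϑ₃`. -/
theorem tau_deriv_log_theta_nullwerte
    (zeta : ℂ → ℂ → ℂ) (eta1 : ℂ → ℂ)
    (hzeta : IsWeierstrassZeta zeta) (heta1 : IsEta1 zeta eta1) :
    ∀ τ : ℂ, 0 < τ.im →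
      HasDerivAt thetaNull4
        ((Complex.I / (12 * (Real.pi : ℂ))) *
          (3 * eta1 τ - (Real.pi : ℂ) ^ 2 * (2 * thetaNull2 τ ^ 4 + thetaNull4 τ ^ 4))
          * thetaNull4 τ) τ ∧
      HasDerivAt thetaNull3
        ((Complex.I / (12 * (Real.pi : ℂ))) *
          (3 * eta1 τ + (Real.pi : ℂ) ^ 2 * (thetaNull2 τ ^ 4 - thetaNull4 τ ^ 4))
          * thetaNull3 τ) τ := by
  intro τ hτ
  have hW₄ : thetaWeightTwo 2 τ = -(2 * thetaNull2 τ ^ 4 + thetaNull4 τ ^ 4) := by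
    change -thetaNull2 τ ^ 4 - thetaNull3 τ ^ 4 = _
    rw [thetaNull3_pow_four_eq_add hτ]
    ring
  have h₄ := hasDerivAt_thetaNull hzeta heta1 2 hτ
  rw [hW₄, mul_neg, ← sub_eq_add_neg] at h₄
  exact ⟨h₄, hasDerivAt_thetaNull hzeta heta1 1 hτ⟩

end
end

section
/- Fix τ ∈ ℍ and (r,s) ∈ ℂ², set a₁ = r + sτ, and let p ∈ ℂ satisfy the constraint ζ(a₁+p|τ) + ζ(a₁−p|τ) = 2(rη₁(τ) + sη₂(τ)). Assume a₁ ∉ (1/2)Λ_τ, 2p ∉ Λ_τ, and p ∉ {±a₁} + Λ_τ. Then for all z with z ∉ ({±a₁, ±p} + Λ_τ), the identity −(i/(4π))[ζ(z−a₁|τ) + ζ(z+a₁|τ) − 2zη₁(τ)] + (i/(4π))·(℘(z−a₁|τ) − ℘(z+a₁|τ))/(ζ(a₁+p|τ) + ζ(a₁−p|τ) + ζ(z−a₁|τ) − ζ(z+a₁|τ)) = −(i/(4π))(ζ(z−p|τ) + ζ(z+p|τ) − 2zη₁(τ)) holds; in particular the left-hand side is holomorphic at z = ±a₁ and has simple poles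 exactly at {±p} + Λ_τ, each with residue −i/(4π). -/
open Complex Filter Topology Asymptotics

/-!
The heart of the matter is the Frobenius–Stickelberger relation
`(ζ(x) + ζ(y) - ζ(x + y))² = ℘(x) + ℘(y) + ℘(x + y)`: as a function of `x` the difference of the
two sides is elliptic, its singularities are removable, and it tends to `0` at the origin, so it
vanishes by Liouville's theorem.

Let `F(z) = ζ(a + p) + ζ(a - p) + ζ(z - a) - ζ(z + a)` be the denominator in `Ω₁₂` and let
`G(z) = ζ(z - a) + ζ(z + a) - ζ(z - p) - ζ(z + p)`. The four instances of the relation with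
`x ∈ {z - a, z + a}` and `x + y ∈ {z - p, z + p}` combine to `F G = ℘(z - a) - ℘(z + a)`. This is
the asserted identity wherever `F ≠ 0`. Since moreover `F' = -(℘(z - a) - ℘(z + a)) = -F G`, a zero
of `F` where `G` is regular would force `F` to vanish identically, contradicting its pole at `a`.
-/

theorem exists_differentiable_eventuallyEq_nhdsNE_of_tendsto {E : Type*} [NormedAddCommGroup E]
    [NormedSpace ℂ E] [CompleteSpace E] {f : ℂ → E} (hf : Meromorphic f)
    (hlim : ∀ z, ∃ c, Tendsto f (𝓝[≠] z) (𝓝 c)) :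
    ∃ g : ℂ → E, Differentiable ℂ g ∧ ∀ z, f =ᶠ[𝓝[≠] z] g := by
  have hmero : MeromorphicOn f Set.univ := fun z _ => hf z
  refine ⟨toMeromorphicNFOn f Set.univ, fun z => ?_, fun z =>
    (hmero.toMeromorphicNFOn_eq_self_on_nhdsNE (Set.mem_univ z)).symm⟩
  have hnf := meromorphicNFOn_toMeromorphicNFOn f Set.univ (Set.mem_univ z)
  refine (hnf.meromorphicOrderAt_nonneg_iff_analyticAt.1 ?_).differentiableAt
  rw [meromorphicOrderAt_toMeromorphicNFOn hmero (Set.mem_univ z)]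
  exact (tendsto_nhds_iff_meromorphicOrderAt_nonneg (hf z)).1 (hlim z)

theorem tendsto_nhdsNE_of_meromorphic_of_periodic {E : Type*} [NormedAddCommGroup E]
    [NormedSpace ℂ E] [CompleteSpace E] (Λ : Submodule ℤ ℂ) [DiscreteTopology Λ] [IsZLattice ℝ Λ]
    {f : ℂ → E} (hf : Meromorphic f) (hlim : ∀ z, ∃ c, Tendsto f (𝓝[≠] z) (𝓝 c))
    (hper : ∀ l ∈ Λ, ∀ z, ∀ᶠ w in 𝓝[≠] z, f (w + l) = f w) {z₀ : ℂ} {c : E}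
    (hz₀ : Tendsto f (𝓝[≠] z₀) (𝓝 c)) (z : ℂ) : Tendsto f (𝓝[≠] z) (𝓝 c) := by
  obtain ⟨g, hg, hfg⟩ := exists_differentiable_eventuallyEq_nhdsNE_of_tendsto hf hlim
  have hfg_lim (w : ℂ) : Tendsto f (𝓝[≠] w) (𝓝 (g w)) :=
    ((hg.continuous.tendsto w).mono_left nhdsWithin_le_nhds).congr' (hfg w).symm
  have hg_per (w l : ℂ) (hl : l ∈ Λ) : g (w + l) = g w :=
    tendsto_nhds_unique
      (((hfg_lim (w + l)).comp map_add_right_nhdsNE.le).congr' (hper l hl w)) (hfg_lim w)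
  have hconst : g z₀ = g z := hg.apply_eq_apply_of_bounded
    (IsZLattice.isCompact_range_of_periodic Λ g hg.continuous hg_per).isBounded z₀ z
  rw [tendsto_nhds_unique hz₀ (hfg_lim z₀), hconst]
  exact hfg_lim z

theorem eventually_eq_zero_of_deriv_eq_smul {𝕜 E : Type*} [NontriviallyNormedField 𝕜] [CharZero 𝕜]
    [NormedAddCommGroup E] [NormedSpace 𝕜 E] [CompleteSpace E]
    {f : 𝕜 → E} {g : 𝕜 → 𝕜} {z : 𝕜}
    (hf : AnalyticAt 𝕜 f z) (hg : AnalyticAt 𝕜 g z)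
    (hfg : deriv f =ᶠ[𝓝 z] g • f) (hz : f z = 0) : ∀ᶠ w in 𝓝 z, f w = 0 := by
  have horder : analyticOrderAt g z + analyticOrderAt f z + 1 = analyticOrderAt f z := by
    rw [← analyticOrderAt_smul hg hf, ← analyticOrderAt_congr hfg, hf.analyticOrderAt_deriv_add_one]
    simp only [hz, sub_zero]
  rw [← analyticOrderAt_eq_top]
  by_contra hne
  lift analyticOrderAt f z to ℕ using hne with n
  have : ((n + 1 : ℕ) : ℕ∞) ≤ n := by
    calc ((n + 1 : ℕ) : ℕ∞) ≤ analyticOrderAt g z + n + 1 := by push_cast; gcongr; exact le_add_self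
      _ = n := horder
  exact n.lt_succ_self.not_ge (by exact_mod_cast this)

open scoped PeriodPair

section Lattice

variable (L : PeriodPair)

theorem isPreconnected_compl_lattice : IsPreconnected (L.lattice : Set ℂ)ᶜ :=
  have : Countable L.lattice := countable_of_Lindelof_of_discrete
  (Set.Countable.isConnected_compl_of_one_lt_rank (by simp) (Set.to_countable _)).isPreconnected

theorem eventually_nhdsNE_notMem_lattice (z : ℂ) : ∀ᶠ w in 𝓝[≠] z, w ∉ L.lattice := by
  filter_upwards [nhdsWithin_le_nhds (L.compl_lattice_sdiff_singleton_mem_nhds z),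
    self_mem_nhdsWithin] with w hw hne hL using hw ⟨hL, hne⟩

theorem eventually_nhdsNE_add_notMem_lattice (z c : ℂ) :
    ∀ᶠ w in 𝓝[≠] z, w + c ∉ L.lattice :=
  Tendsto.eventually (f := (· + c)) map_add_right_nhdsNE.le
    (eventually_nhdsNE_notMem_lattice L (z + c))

end Lattice

/-- `ζ` is the Weierstrass zeta function of the lattice of `L`. The derivative together with the
normalization at the origin pins down `ζ` off the lattice; its values at the lattice points (the
poles) are constrained only by oddness. -/
structure IsZetaFunction (L : PeriodPair) (ζ : ℂ → ℂ) : Prop where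
  neg : ∀ z, ζ (-z) = -ζ z
  hasDerivAt : ∀ z ∉ L.lattice, HasDerivAt ζ (-℘[L] z) z
  tendsto_sub_inv : Tendsto (fun z => ζ z - z⁻¹) (𝓝[≠] 0) (𝓝 0)

namespace IsZetaFunction

variable {L : PeriodPair} {ζ : ℂ → ℂ}

theorem analyticAt (hζ : IsZetaFunction L ζ) {z : ℂ} (hz : z ∉ L.lattice) : AnalyticAt ℂ ζ z := by
  refine analyticAt_iff_eventually_differentiableAt.2 ?_
  filter_upwards [L.isClosed_lattice.isOpen_compl.mem_nhds hz] with w hw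
  exact (hζ.hasDerivAt w hw).differentiableAt

theorem exists_quasiPeriod (hζ : IsZetaFunction L ζ) (l : L.lattice) :
    ∃ η, ∀ z ∉ L.lattice, ζ (z + l) = ζ z + η := by
  have hderiv : ∀ z ∉ L.lattice, HasDerivAt (fun z => ζ (z + l) - ζ z) 0 z := fun z hz => by
    have hadd := (hζ.hasDerivAt (z + l) fun h => hz <|
      by simpa using sub_mem h l.2).comp_add_const z l
    simpa only [L.weierstrassP_add_coe, sub_self] using hadd.fun_sub (hζ.hasDerivAt z hz)
  obtain ⟨η, hη⟩ := L.isClosed_lattice.isOpen_compl.exists_is_const_of_deriv_eq_zero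
    (isPreconnected_compl_lattice L)
    (fun z hz => (hderiv z hz).differentiableAt.differentiableWithinAt)
    (fun z hz => (hderiv z hz).deriv)
  exact ⟨η, fun z hz => sub_eq_iff_eq_add'.1 (hη z hz)⟩

theorem exists_analyticAt_eq_inv_add (hζ : IsZetaFunction L ζ) :
    ∃ κ : ℂ → ℂ, AnalyticAt ℂ κ 0 ∧ κ 0 = 0 ∧ deriv κ 0 = 0 ∧ ∀ z ≠ 0, ζ z = z⁻¹ + κ z := by
  set κ : ℂ → ℂ := Function.update (fun z => ζ z - z⁻¹) 0 0
  have hκ_ne (z : ℂ) (hz : z ≠ 0) : κ z = ζ z - z⁻¹ := Function.update_of_ne hz ..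
  have hderiv : ∀ᶠ z in 𝓝[≠] 0, HasDerivAt κ (-L.weierstrassPExcept 0 z) z := by
    filter_upwards [eventually_nhdsNE_notMem_lattice L 0, self_mem_nhdsWithin] with z hz hne
    have hκz : κ =ᶠ[𝓝 z] fun z => ζ z - z⁻¹ :=
      (isOpen_compl_singleton.eventually_mem hne).mono hκ_ne
    refine (((hζ.hasDerivAt z hz).fun_sub (hasDerivAt_inv hne)).congr_of_eventuallyEq
      hκz).congr_deriv ?_
    rw [← L.weierstrassPExcept_add 0, ZeroMemClass.coe_zero]
    ring
  have hκ : AnalyticAt ℂ κ 0 :=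
    analyticAt_of_differentiable_on_punctured_nhds_of_continuousAt
      (hderiv.mono fun z hz => hz.differentiableAt)
      (continuousAt_update_same.2 hζ.tendsto_sub_inv)
  have hderiv_zero : deriv κ =ᶠ[𝓝 0] -L.weierstrassPExcept 0 :=
    (hκ.deriv.continuousAt.eventuallyEq_nhds_iff_eventuallyEq_nhdsNE
      (L.analyticAt_weierstrassPExcept 0).neg.continuousAt).1 (hderiv.mono fun z hz => hz.deriv)
  exact ⟨κ, hκ, Function.update_self .., by simpa using hderiv_zero.self_of_nhds,
    fun z hz => by rw [hκ_ne z hz, add_sub_cancel]⟩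

theorem meromorphic (hζ : IsZetaFunction L ζ) : Meromorphic ζ := by
  obtain ⟨κ, hκ, -, -, hζκ⟩ := hζ.exists_analyticAt_eq_inv_add
  have hzero : MeromorphicAt ζ 0 :=
    ((MeromorphicAt.id 0).inv.add hκ.meromorphicAt).congr
      (eventually_mem_nhdsWithin.mono fun z hz => (hζκ z hz).symm)
  intro z
  by_cases hz : z ∈ L.lattice
  · have hshift : MeromorphicAt (fun w => ζ (w - z)) z :=
      meromorphicAt_fun_comp_sub_const_iff_meromorphicAt.2 (by rwa [sub_self])
    obtain ⟨η, hη⟩ := hζ.exists_quasiPeriod ⟨z, hz⟩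
    refine (hshift.add (MeromorphicAt.const η z)).congr ?_
    filter_upwards [eventually_nhdsNE_add_notMem_lattice L z (-z)] with w hw
    simpa [sub_eq_add_neg] using (hη _ hw).symm
  · exact (hζ.analyticAt hz).meromorphicAt

end IsZetaFunction

/-- The failure at `(z, a)` of the Frobenius–Stickelberger relation
`(ζ(z) + ζ(a) - ζ(z + a))² = ℘(z) + ℘(a) + ℘(z + a)`, regarded as a function of `z` so that
Liouville's theorem applies to it. -/
noncomputable def frobeniusDefect (L : PeriodPair) (ζ : ℂ → ℂ) (a z : ℂ) : ℂ :=
  (ζ z + ζ a - ζ (z + a)) ^ 2 - (℘[L] z + ℘[L] a + ℘[L] (z + a))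

namespace IsZetaFunction

variable {L : PeriodPair} {ζ : ℂ → ℂ} {a z : ℂ}

theorem meromorphic_frobeniusDefect (hζ : IsZetaFunction L ζ) (a : ℂ) :
    Meromorphic (frobeniusDefect L ζ a) := by
  have hadd {f : ℂ → ℂ} (hf : Meromorphic f) : Meromorphic fun z => f (z + a) :=
    Meromorphic.meromorphic_fun_comp_add_const_iff_meromorphic.2 hf
  exact .fun_sub (((hζ.meromorphic.fun_add (.const _)).fun_sub (hadd hζ.meromorphic)).fun_pow)
    ((L.meromorphic_weierstrassP.fun_add (.const _)).fun_add (hadd L.meromorphic_weierstrassP))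

theorem continuousAt_frobeniusDefect (hζ : IsZetaFunction L ζ) (hz : z ∉ L.lattice)
    (hza : z + a ∉ L.lattice) : ContinuousAt (frobeniusDefect L ζ a) z := by
  have := (hζ.analyticAt hz).continuousAt
  have := (hζ.analyticAt hza).continuousAt
  have := (L.analyticOnNhd_weierstrassP z hz).continuousAt
  have := (L.analyticOnNhd_weierstrassP (z + a) hza).continuousAt
  unfold frobeniusDefect
  fun_prop

theorem frobeniusDefect_neg_sub (hζ : IsZetaFunction L ζ) (a z : ℂ) :
    frobeniusDefect L ζ a (-a - z) = frobeniusDefect L ζ a z := by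
  have hadd : -a - z + a = -z := by ring
  rw [frobeniusDefect, frobeniusDefect, hadd, neg_sub_left, hζ.neg, hζ.neg, L.weierstrassP_neg,
    L.weierstrassP_neg]
  ring

theorem frobeniusDefect_add_coe (hζ : IsZetaFunction L ζ) (hz : z ∉ L.lattice)
    (hza : z + a ∉ L.lattice) (l : L.lattice) :
    frobeniusDefect L ζ a (z + l) = frobeniusDefect L ζ a z := by
  obtain ⟨η, hη⟩ := hζ.exists_quasiPeriod l
  simp only [frobeniusDefect, add_right_comm z _ a, hη z hz, hη (z + a) hza,
    L.weierstrassP_add_coe]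
  ring

theorem tendsto_frobeniusDefect_zero (hζ : IsZetaFunction L ζ) (ha : a ∉ L.lattice) :
    Tendsto (frobeniusDefect L ζ a) (𝓝[≠] 0) (𝓝 0) := by
  obtain ⟨κ, hκ, hκ_zero, hκ_deriv, hζκ⟩ := hζ.exists_analyticAt_eq_inv_add
  set v : ℂ → ℂ := fun z => κ z + ζ a - ζ (z + a)
  have hza : (0 : ℂ) + a ∉ L.lattice := by rwa [zero_add]
  have hv : HasDerivAt v (℘[L] a) 0 :=
    ((hκ.differentiableAt.hasDerivAt.add_const (ζ a)).fun_sub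
      ((hζ.hasDerivAt _ hza).comp_add_const 0 a)).congr_deriv (by simp [hκ_deriv])
  have hv_zero : v 0 = 0 := by simp [v, hκ_zero]
  have hregular : ContinuousAt
      (fun z => v z ^ 2 - (L.weierstrassPExcept 0 z + ℘[L] a + ℘[L] (z + a))) 0 := by
    have := hv.continuousAt
    have := (L.analyticAt_weierstrassPExcept 0).continuousAt
    have := (L.analyticOnNhd_weierstrassP (0 + a) hza).continuousAt
    fun_prop
  have hslope : Tendsto (fun z => z⁻¹ * v z) (𝓝[≠] 0) (𝓝 (℘[L] a)) := by
    simpa [hv_zero] using hasDerivAt_iff_tendsto_slope_zero.1 hv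
  -- Expanding the square around `1 / z` cancels the double pole and leaves `2 v(z) / z`.
  have hexpand : ∀ᶠ z in 𝓝[≠] 0, 2 * (z⁻¹ * v z)
      + (v z ^ 2 - (L.weierstrassPExcept 0 z + ℘[L] a + ℘[L] (z + a)))
      = frobeniusDefect L ζ a z := by
    filter_upwards [self_mem_nhdsWithin] with z hz
    rw [frobeniusDefect, ← L.weierstrassPExcept_add 0 z, hζκ z hz]
    simp only [v, ZeroMemClass.coe_zero]
    ring
  convert ((hslope.const_mul 2).add (hregular.tendsto.mono_left nhdsWithin_le_nhds)).congr' hexpand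
  simp only [hv_zero, L.weierstrassPExcept_zero, zero_add]
  ring

theorem tendsto_frobeniusDefect_of_mem (hζ : IsZetaFunction L ζ) (ha : a ∉ L.lattice)
    (hz : z ∈ L.lattice) : Tendsto (frobeniusDefect L ζ a) (𝓝[≠] z) (𝓝 0) := by
  have hsub : Tendsto (· - z) (𝓝[≠] z) (𝓝[≠] 0) := sub_self z ▸ map_subRight_nhdsNE.le
  refine ((hζ.tendsto_frobeniusDefect_zero ha).comp hsub).congr' ?_
  filter_upwards [hsub.eventually (eventually_nhdsNE_notMem_lattice L 0),
    hsub.eventually (eventually_nhdsNE_add_notMem_lattice L 0 a)] with w hw hwa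
  simpa using (hζ.frobeniusDefect_add_coe hw hwa ⟨z, hz⟩).symm

theorem sq_add_sub_eq (hζ : IsZetaFunction L ζ) (hz : z ∉ L.lattice) (ha : a ∉ L.lattice)
    (hza : z + a ∉ L.lattice) :
    (ζ z + ζ a - ζ (z + a)) ^ 2 = ℘[L] z + ℘[L] a + ℘[L] (z + a) := by
  have hlim (w : ℂ) : ∃ c, Tendsto (frobeniusDefect L ζ a) (𝓝[≠] w) (𝓝 c) := by
    by_cases hw : w ∈ L.lattice
    · exact ⟨0, hζ.tendsto_frobeniusDefect_of_mem ha hw⟩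
    by_cases hwa : w + a ∈ L.lattice
    · have hreflect : -a - w ∈ L.lattice := by simpa only [neg_sub_left] using neg_mem hwa
      exact ⟨0, ((hζ.tendsto_frobeniusDefect_of_mem ha hreflect).comp
        map_subLeft_nhdsNE.le).congr (hζ.frobeniusDefect_neg_sub a)⟩
    · exact ⟨_, (hζ.continuousAt_frobeniusDefect hw hwa).tendsto.mono_left nhdsWithin_le_nhds⟩
  have hper : ∀ l ∈ L.lattice, ∀ z, ∀ᶠ w in 𝓝[≠] z,
      frobeniusDefect L ζ a (w + l) = frobeniusDefect L ζ a w := fun l hl z => by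
    filter_upwards [eventually_nhdsNE_notMem_lattice L z,
      eventually_nhdsNE_add_notMem_lattice L z a] with w hw hwa
    exact hζ.frobeniusDefect_add_coe hw hwa ⟨l, hl⟩
  have hzero := tendsto_nhdsNE_of_meromorphic_of_periodic L.lattice
    (hζ.meromorphic_frobeniusDefect a) hlim hper (hζ.tendsto_frobeniusDefect_zero ha) z
  exact sub_eq_zero.1 (tendsto_nhds_unique
    ((hζ.continuousAt_frobeniusDefect hz hza).tendsto.mono_left nhdsWithin_le_nhds) hzero)

theorem tendsto_sub_mul_add (hζ : IsZetaFunction L ζ) {b : ℂ} {g : ℂ → ℂ} (hg : ContinuousAt g b) :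
    Tendsto (fun z => (z - b) * (ζ (z - b) + g z)) (𝓝[≠] b) (𝓝 1) := by
  have hsub : Tendsto (· - b) (𝓝[≠] b) (𝓝[≠] 0) := sub_self b ▸ map_subRight_nhdsNE.le
  have hregular : Tendsto (fun z => ζ (z - b) - (z - b)⁻¹ + g z) (𝓝[≠] b) (𝓝 (0 + g b)) :=
    (hζ.tendsto_sub_inv.comp hsub).add (hg.tendsto.mono_left nhdsWithin_le_nhds)
  have hlim := ((hsub.mono_right nhdsWithin_le_nhds).mul hregular).const_add 1
  rw [zero_mul, add_zero] at hlim
  refine hlim.congr' ?_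
  filter_upwards [self_mem_nhdsWithin] with z hz
  have : z - b ≠ 0 := sub_ne_zero.2 hz
  field_simp
  ring

end IsZetaFunction

/-- The denominator `ζ(a + p) + ζ(a - p) + ζ(z - a) - ζ(z + a)` occurring in `Ω₁₂`, as a function of
`z`. -/
noncomputable def zetaDenominator (ζ : ℂ → ℂ) (a p z : ℂ) : ℂ :=
  ζ (a + p) + ζ (a - p) + ζ (z - a) - ζ (z + a)

namespace IsZetaFunction

variable {L : PeriodPair} {ζ : ℂ → ℂ} {a p z : ℂ}

theorem zetaDenominator_mul (hζ : IsZetaFunction L ζ)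
    (hpa : p - a ∉ L.lattice) (hpa' : p + a ∉ L.lattice)
    (hza : z - a ∉ L.lattice) (hza' : z + a ∉ L.lattice) (hzp : z - p ∉ L.lattice)
    (hzp' : z + p ∉ L.lattice) :
    zetaDenominator ζ a p z * (ζ (z - a) + ζ (z + a) - ζ (z - p) - ζ (z + p)) =
      ℘[L] (z - a) - ℘[L] (z + a) := by
  have hfrob {x y w : ℂ} (hx : x ∉ L.lattice) (hy : y ∉ L.lattice) (hw : w ∉ L.lattice)
      (hxy : x + y = w) : (ζ x + ζ y - ζ w) ^ 2 = ℘[L] x + ℘[L] y + ℘[L] w := by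
    subst hxy
    exact hζ.sq_add_sub_eq hx hy hw
  have hap : a - p ∉ L.lattice := by rwa [← neg_sub, neg_mem_iff]
  have hap' : a + p ∉ L.lattice := by rwa [add_comm]
  have hA := hfrob hza hap' hzp' (by ring)
  have hB := hfrob hza hap hzp (by ring)
  have hC := hfrob hza' (neg_mem_iff.not.2 hap') hzp (by ring)
  have hD := hfrob hza' (neg_mem_iff.not.2 hap) hzp' (by ring)
  simp only [hζ.neg, L.weierstrassP_neg] at hC hD
  rw [zetaDenominator]
  -- With left-hand sides `A²`, `B²`, `C²`, `D²`, the two factors are `A - D = B - C` and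
  -- `(A + B + C + D) / 2`.
  linear_combination (hA + hB - hC - hD) / 2

theorem hasDerivAt_zetaDenominator (hζ : IsZetaFunction L ζ) (hza : z - a ∉ L.lattice)
    (hza' : z + a ∉ L.lattice) :
    HasDerivAt (zetaDenominator ζ a p) (-(℘[L] (z - a) - ℘[L] (z + a))) z :=
  ((((hζ.hasDerivAt _ hza).comp_sub_const z a).const_add _).fun_sub
    ((hζ.hasDerivAt _ hza').comp_add_const z a)).congr_deriv (by ring)

theorem meromorphic_zetaDenominator (hζ : IsZetaFunction L ζ) (a p : ℂ) :
    Meromorphic (zetaDenominator ζ a p) :=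
  ((Meromorphic.const _).fun_add
    (Meromorphic.meromorphic_fun_comp_sub_const_iff_meromorphic.2 hζ.meromorphic)).fun_sub
    (Meromorphic.meromorphic_fun_comp_add_const_iff_meromorphic.2 hζ.meromorphic)

theorem eventually_zetaDenominator_ne_zero (hζ : IsZetaFunction L ζ) (ha : 2 * a ∉ L.lattice)
    (p z : ℂ) : ∀ᶠ w in 𝓝[≠] z, zetaDenominator ζ a p w ≠ 0 := by
  have hmero := hζ.meromorphic_zetaDenominator a p
  have hlim : Tendsto (fun w => (w - a) * zetaDenominator ζ a p w) (𝓝[≠] a) (𝓝 1) := by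
    have hcont : ContinuousAt ζ (a + a) := (hζ.analyticAt (two_mul a ▸ ha)).continuousAt
    convert hζ.tendsto_sub_mul_add (b := a) (g := fun w => ζ (a + p) + ζ (a - p) - ζ (w + a))
      (by fun_prop) using 3 with w
    rw [zetaDenominator]
    ring
  have horder : meromorphicOrderAt (zetaDenominator ζ a p) a ≠ ⊤ := fun h => by
    have hzero : Tendsto (fun w => (w - a) * zetaDenominator ζ a p w) (𝓝[≠] a) (𝓝 0) :=
      tendsto_const_nhds.congr' <|
        (meromorphicOrderAt_eq_top_iff.1 h).mono fun w hw => by simp only [hw, mul_zero]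
    exact one_ne_zero (tendsto_nhds_unique hlim hzero)
  exact (meromorphicOrderAt_ne_top_iff_eventually_ne_zero (hmero z)).1
    (hmero.exists_meromorphicOrderAt_ne_top_iff_forall.1 ⟨a, horder⟩ z)

theorem deriv_zetaDenominator_eventuallyEq (hζ : IsZetaFunction L ζ)
    (hpa : p - a ∉ L.lattice) (hpa' : p + a ∉ L.lattice) (hza : z - a ∉ L.lattice)
    (hza' : z + a ∉ L.lattice) (hzp : z - p ∉ L.lattice) (hzp' : z + p ∉ L.lattice) :
    deriv (zetaDenominator ζ a p) =ᶠ[𝓝 z]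
      (fun w => -(ζ (w - a) + ζ (w + a) - ζ (w - p) - ζ (w + p))) • zetaDenominator ζ a p := by
  have hnhds {f : ℂ → ℂ} (hf : Continuous f) (hz : f z ∉ L.lattice) :
      ∀ᶠ w in 𝓝 z, f w ∉ L.lattice :=
    hf.continuousAt.eventually_mem (L.isClosed_lattice.isOpen_compl.mem_nhds hz)
  filter_upwards [hnhds (continuous_sub_right a) hza, hnhds (continuous_add_const a) hza',
    hnhds (continuous_sub_right p) hzp, hnhds (continuous_add_const p) hzp']
    with w hwa hwa' hwp hwp'
  rw [(hζ.hasDerivAt_zetaDenominator hwa hwa').deriv,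
    ← hζ.zetaDenominator_mul hpa hpa' hwa hwa' hwp hwp', Pi.smul_apply', smul_eq_mul, neg_mul,
    mul_comm]

theorem zetaDenominator_ne_zero (hζ : IsZetaFunction L ζ) (ha : 2 * a ∉ L.lattice)
    (hpa : p - a ∉ L.lattice) (hpa' : p + a ∉ L.lattice) (hza : z - a ∉ L.lattice)
    (hza' : z + a ∉ L.lattice) (hzp : z - p ∉ L.lattice) (hzp' : z + p ∉ L.lattice) :
    zetaDenominator ζ a p z ≠ 0 := by
  intro hzero
  have := hζ.analyticAt hza
  have := hζ.analyticAt hza'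
  have := hζ.analyticAt hzp
  have := hζ.analyticAt hzp'
  have hlocal := eventually_eq_zero_of_deriv_eq_smul (by unfold zetaDenominator; fun_prop)
    (by fun_prop) (hζ.deriv_zetaDenominator_eventuallyEq hpa hpa' hza hza' hzp hzp') hzero
  obtain ⟨w, hw, hw_zero⟩ := ((hζ.eventually_zetaDenominator_ne_zero ha p z).and
    (nhdsWithin_le_nhds hlocal)).exists
  exact hw hw_zero

theorem neg_mul_add_mul_div_zetaDenominator (hζ : IsZetaFunction L ζ) (ha : 2 * a ∉ L.lattice)
    (hpa : p - a ∉ L.lattice) (hpa' : p + a ∉ L.lattice) (hza : z - a ∉ L.lattice)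
    (hza' : z + a ∉ L.lattice) (hzp : z - p ∉ L.lattice) (hzp' : z + p ∉ L.lattice) (c η : ℂ) :
    -c * (ζ (z - a) + ζ (z + a) - 2 * z * η)
        + c * (℘[L] (z - a) - ℘[L] (z + a)) / zetaDenominator ζ a p z
      = -c * (ζ (z - p) + ζ (z + p) - 2 * z * η) := by
  rw [← hζ.zetaDenominator_mul hpa hpa' hza hza' hzp hzp', mul_left_comm,
    mul_div_cancel_left₀ _ (hζ.zetaDenominator_ne_zero ha hpa hpa' hza hza' hzp hzp')]
  ring

theorem analyticAt_neg_mul_add_sub (hζ : IsZetaFunction L ζ) (hzp : z - p ∉ L.lattice)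
    (hzp' : z + p ∉ L.lattice) (c η : ℂ) :
    AnalyticAt ℂ (fun w => -c * (ζ (w - p) + ζ (w + p) - 2 * w * η)) z := by
  have := hζ.analyticAt hzp
  have := hζ.analyticAt hzp'
  fun_prop

theorem tendsto_sub_mul_neg_mul_add_sub (hζ : IsZetaFunction L ζ) (hp : 2 * p ∉ L.lattice)
    (c η : ℂ) :
    Tendsto (fun z => (z - p) * (-c * (ζ (z - p) + ζ (z + p) - 2 * z * η))) (𝓝[≠] p)
      (𝓝 (-c)) := by
  have := (hζ.analyticAt (two_mul p ▸ hp)).continuousAt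
  convert (hζ.tendsto_sub_mul_add (b := p) (g := fun z => ζ (z + p) - 2 * z * η)
    (by fun_prop)).const_mul (-c) using 2
  · ring
  · ring

end IsZetaFunction

theorem Omega12_identity_general {L : PeriodPair} {ζ : ℂ → ℂ} (hζ : IsZetaFunction L ζ) {a p : ℂ}
    (ha : 2 * a ∉ L.lattice) (hp : 2 * p ∉ L.lattice) (hpa : p - a ∉ L.lattice)
    (hpa' : p + a ∉ L.lattice) (c η : ℂ) :
    (∀ z, z - a ∉ L.lattice → z + a ∉ L.lattice → z - p ∉ L.lattice → z + p ∉ L.lattice →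
      -c * (ζ (z - a) + ζ (z + a) - 2 * z * η)
        + c * (℘[L] (z - a) - ℘[L] (z + a))
          / (ζ (a + p) + ζ (a - p) + ζ (z - a) - ζ (z + a))
      = -c * (ζ (z - p) + ζ (z + p) - 2 * z * η)) ∧
    AnalyticAt ℂ (fun z => -c * (ζ (z - p) + ζ (z + p) - 2 * z * η)) a ∧
    AnalyticAt ℂ (fun z => -c * (ζ (z - p) + ζ (z + p) - 2 * z * η)) (-a) ∧
    Tendsto (fun z => (z - p) * (-c * (ζ (z - p) + ζ (z + p) - 2 * z * η))) (𝓝[≠] p)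
      (𝓝 (-c)) ∧
    Tendsto (fun z => (z + p) * (-c * (ζ (z - p) + ζ (z + p) - 2 * z * η))) (𝓝[≠] (-p))
      (𝓝 (-c)) := by
  refine ⟨fun z hza hza' hzp hzp' => ?_, hζ.analyticAt_neg_mul_add_sub ?_ ?_ c η,
    hζ.analyticAt_neg_mul_add_sub ?_ ?_ c η, hζ.tendsto_sub_mul_neg_mul_add_sub hp c η, ?_⟩
  · exact hζ.neg_mul_add_mul_div_zetaDenominator ha hpa hpa' hza hza' hzp hzp' c η
  · rwa [← neg_sub, neg_mem_iff]
  · rwa [add_comm]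
  · rwa [← neg_add', neg_mem_iff, add_comm]
  · rwa [neg_add_eq_sub]
  · have hp' : 2 * -p ∉ L.lattice := by rwa [mul_neg, neg_mem_iff]
    convert hζ.tendsto_sub_mul_neg_mul_add_sub hp' c η using 3 with z
    · ring
    · rw [sub_neg_eq_add, ← sub_eq_add_neg, add_comm (ζ (z + p))]

/-- The period pair `(1, τ)`, whose lattice is `Λ_τ`. -/
noncomputable def normalizedPeriodPair (τ : ℂ) (hτ : 0 < τ.im) : PeriodPair where
  ω₁ := 1
  ω₂ := τ
  indep := by
    refine LinearIndependent.pair_iff.2 fun s t h => ?_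
    have ht : t = 0 := by simpa [hτ.ne'] using congrArg Complex.im h
    exact ⟨by simpa [ht] using congrArg Complex.re h, ht⟩

theorem mem_normalizedPeriodPair_lattice {τ : ℂ} (hτ : 0 < τ.im) (z : ℂ) :
    z ∈ (normalizedPeriodPair τ hτ).lattice ↔ InLattice τ z := by
  simp [PeriodPair.mem_lattice, normalizedPeriodPair, InLattice, eq_comm]

theorem weierstrassP_normalizedPeriodPair {τ : ℂ} (hτ : 0 < τ.im) (z : ℂ) :
    ℘[normalizedPeriodPair τ hτ] z = wp τ z := by
  set L := normalizedPeriodPair τ hτ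
  set f : ℤ × ℤ → ℂ := fun w => 1 / (z - (w.1 + w.2 * τ)) ^ 2 - 1 / (w.1 + w.2 * τ) ^ 2
  have hcoe (w : ℤ × ℤ) : (L.latticeEquivProd.symm w : ℂ) = w.1 + w.2 * τ := by
    rw [L.latticeEquiv_symm_apply]
    simp [L, normalizedPeriodPair]
  have hsum : HasSum f (℘[L] z) := by
    convert (L.latticeEquivProd.symm.toEquiv.hasSum_iff).2 (L.hasSum_weierstrassP z) using 1
    ext w
    simp [f, hcoe]
  rw [← hsum.tsum_eq, ← hsum.summable.tsum_subtype_add_tsum_subtype_compl {0}, tsum_singleton, wp]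
  simp only [f, one_div, inv_pow]
  congr 1
  simp

theorem IsWeierstrassZeta.isZetaFunction {zeta : ℂ → ℂ → ℂ} (hzeta : IsWeierstrassZeta zeta) {τ : ℂ}
    (hτ : 0 < τ.im) : IsZetaFunction (normalizedPeriodPair τ hτ) (zeta τ) where
  neg := (hzeta τ hτ).1
  hasDerivAt z hz := by
    rw [weierstrassP_normalizedPeriodPair]
    exact (hzeta τ hτ).2.1 z ((mem_normalizedPeriodPair_lattice hτ z).not.1 hz)
  tendsto_sub_inv := (hzeta τ hτ).2.2

/-- formula (175) and its simplification: under the constraint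
`ζ(a₁+p) + ζ(a₁-p) = 2(rη₁ + sη₂)` with `a₁ = r + sτ`, the function `Ω₁₂` of (175) equals
`-(i/(4π))(ζ(z-p) + ζ(z+p) - 2zη₁)`; in particular the latter is holomorphic at `±a₁` and
has simple poles at `{±p} + Λ_τ` with residue `-i/(4π)`. -/
theorem Omega12_identity
    (τ : ℂ) (hτ : 0 < τ.im) (r s p : ℂ)
    (zeta : ℂ → ℂ → ℂ) (eta1 eta2 : ℂ → ℂ)
    (hzeta : IsWeierstrassZeta zeta) (heta1 : IsEta1 zeta eta1) (heta2 : IsEta2 zeta eta2)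
    (ha : ¬ InLattice τ (2 * (r + s * τ)))
    (hp : ¬ InLattice τ (2 * p))
    (hpa1 : ¬ InLattice τ (p - (r + s * τ)))
    (hpa2 : ¬ InLattice τ (p + (r + s * τ)))
    (hcon : zeta τ ((r + s * τ) + p) + zeta τ ((r + s * τ) - p)
      = 2 * (r * eta1 τ + s * eta2 τ)) :
    (∀ z : ℂ, ¬ InLattice τ (z - (r + s * τ)) → ¬ InLattice τ (z + (r + s * τ)) →
      ¬ InLattice τ (z - p) → ¬ InLattice τ (z + p) →
      -(Complex.I / (4 * (Real.pi : ℂ))) *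
          (zeta τ (z - (r + s * τ)) + zeta τ (z + (r + s * τ)) - 2 * z * eta1 τ)
        + (Complex.I / (4 * (Real.pi : ℂ))) *
            (wp τ (z - (r + s * τ)) - wp τ (z + (r + s * τ)))
          / (zeta τ ((r + s * τ) + p) + zeta τ ((r + s * τ) - p)
              + zeta τ (z - (r + s * τ)) - zeta τ (z + (r + s * τ)))
      = -(Complex.I / (4 * (Real.pi : ℂ))) *
          (zeta τ (z - p) + zeta τ (z + p) - 2 * z * eta1 τ)) ∧
    AnalyticAt ℂ (fun z => -(Complex.I / (4 * (Real.pi : ℂ))) *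
      (zeta τ (z - p) + zeta τ (z + p) - 2 * z * eta1 τ)) (r + s * τ) ∧
    AnalyticAt ℂ (fun z => -(Complex.I / (4 * (Real.pi : ℂ))) *
      (zeta τ (z - p) + zeta τ (z + p) - 2 * z * eta1 τ)) (-(r + s * τ)) ∧
    Tendsto (fun z => (z - p) * (-(Complex.I / (4 * (Real.pi : ℂ))) *
        (zeta τ (z - p) + zeta τ (z + p) - 2 * z * eta1 τ)))
      (𝓝[≠] p) (𝓝 (-Complex.I / (4 * (Real.pi : ℂ)))) ∧
    Tendsto (fun z => (z + p) * (-(Complex.I / (4 * (Real.pi : ℂ))) *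
        (zeta τ (z - p) + zeta τ (z + p) - 2 * z * eta1 τ)))
      (𝓝[≠] (-p)) (𝓝 (-Complex.I / (4 * (Real.pi : ℂ)))) := by
  simp only [← weierstrassP_normalizedPeriodPair hτ, ← mem_normalizedPeriodPair_lattice hτ,
    neg_div] at ha hp hpa1 hpa2 ⊢
  exact Omega12_identity_general (hzeta.isZetaFunction hτ) ha hp hpa1 hpa2 _ _
end
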